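/- arXiv:math/0306390 — 9 statements merged into one kernel-verified Lean document; each statement's English description precedes it below -/
import Mathlib

section
/- Let A be an open subset of ℝ³ and let U : A → ℝ³ be a smooth map with ‖U(x)‖ = 1 for every x ∈ A. For x ∈ A let P_x : ℝ³ → ℝ³ be the orthogonal projection P_x(v) = v − ⟨v, U(x)⟩U(x) onto U(x)^⊥, let × denote the cross product on ℝ³, and for C¹ vector fields X, Y : A → ℝ³ set [X,Y](x) = (DY)_x(X(x)) − (DX)_x(Y(x)), where (DY)_x denotes the Fréchet derivative. Then the following are equivalent: (1) for every smooth vector field X : A → ℝ³ with ⟨X(x), U(x)⟩ = 0 for all x ∈ A, one has P_x([U, U×X](x)) = U(x) × P_x([U, X](x)) for all x ∈ A; (2) for every x ∈ A and every v ∈ ℝ³ with ⟨v, U(x)⟩ = 0, one has (DU)_x(U(x) × v) = U(x) × (DU)_x(v). -/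
/-- Dot product (the standard inner product) on `ℝ³`. -/
def dot3 (u v : Fin 3 → ℝ) : ℝ := ∑ i, u i * v i

/-- Orthogonal projection onto the orthogonal complement of the unit vector `u`:
`v ↦ v − ⟨v,u⟩ u`. -/
def projPerp (u v : Fin 3 → ℝ) : Fin 3 → ℝ := v - dot3 v u • u

/-- Lie bracket of vector fields on `ℝ³`: `[X,Y](x) = (DY)ₓ(X(x)) − (DX)ₓ(Y(x))`. -/
noncomputable def bracket3 (X Y : (Fin 3 → ℝ) → (Fin 3 → ℝ)) (x : Fin 3 → ℝ) : Fin 3 → ℝ :=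
  fderiv ℝ Y x (X x) - fderiv ℝ X x (Y x)

theorem aux_fderiv_cross (U X : (Fin 3 → ℝ) → (Fin 3 → ℝ)) (x h : Fin 3 → ℝ)
    (hU : DifferentiableAt ℝ U x) (hX : DifferentiableAt ℝ X x) :
    fderiv ℝ (fun y => crossProduct (U y) (X y)) x h =
      crossProduct (fderiv ℝ U x h) (X x) + crossProduct (U x) (fderiv ℝ X x h) := by
  have hu := fun i => hasFDerivAt_pi'.1 hU.hasFDerivAt i
  have hx := fun i => hasFDerivAt_pi'.1 hX.hasFDerivAt i
  have key : ∀ i j : Fin 3, HasFDerivAt (fun y => U y i * X y j) _ x :=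
    fun i j => (hu i).mul (hx j)
  have hd : DifferentiableAt ℝ (fun y => crossProduct (U y) (X y)) x := by
    rw [differentiableAt_pi]
    intro i
    fin_cases i
    · simp only [cross_apply]; exact ((key 1 2).sub (key 2 1)).differentiableAt
    · simp only [cross_apply]; exact ((key 2 0).sub (key 0 2)).differentiableAt
    · simp only [cross_apply]; exact ((key 0 1).sub (key 1 0)).differentiableAt
  have hd2 := fun i => hasFDerivAt_pi'.1 hd.hasFDerivAt i
  ext i
  fin_cases i
  · have h1 := (hd2 0).unique (((key 1 2).sub (key 2 1)).congr_of_eventuallyEq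
      (Filter.Eventually.of_forall fun y => by simp [cross_apply]))
    have h2 := DFunLike.congr_fun h1 h
    simp [cross_apply] at h2 ⊢
    rw [h2]; ring
  · have h1 := (hd2 1).unique (((key 2 0).sub (key 0 2)).congr_of_eventuallyEq
      (Filter.Eventually.of_forall fun y => by simp [cross_apply]))
    have h2 := DFunLike.congr_fun h1 h
    simp [cross_apply] at h2 ⊢
    rw [h2]; ring
  · have h1 := (hd2 2).unique (((key 0 1).sub (key 1 0)).congr_of_eventuallyEq
      (Filter.Eventually.of_forall fun y => by simp [cross_apply]))
    have h2 := DFunLike.congr_fun h1 h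
    simp [cross_apply] at h2 ⊢
    rw [h2]; ring

theorem aux_perp (A : Set (Fin 3 → ℝ)) (hA : IsOpen A)
    (U : (Fin 3 → ℝ) → (Fin 3 → ℝ))
    (hUnit : ∀ x ∈ A, dot3 (U x) (U x) = 1) (x : Fin 3 → ℝ) (hx : x ∈ A)
    (hU : DifferentiableAt ℝ U x) (h : Fin 3 → ℝ) :
    dot3 (fderiv ℝ U x h) (U x) = 0 := by
  have hu := fun i => hasFDerivAt_pi'.1 hU.hasFDerivAt i
  have h0 : HasFDerivAt (fun y => U y 0 * U y 0 + U y 1 * U y 1 + U y 2 * U y 2) _ x :=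
    (((hu 0).mul (hu 0)).add ((hu 1).mul (hu 1))).add ((hu 2).mul (hu 2))
  have h1 := h0.unique ((hasFDerivAt_const (1 : ℝ) x).congr_of_eventuallyEq (by
    filter_upwards [hA.mem_nhds hx] with y hy
    simpa [dot3, Fin.sum_univ_three] using hUnit y hy))
  have h2 := DFunLike.congr_fun h1 h
  simp [dot3, Fin.sum_univ_three] at h2 ⊢
  linarith

theorem aux_alg (u a w d p q : Fin 3 → ℝ) (hu : dot3 u u = 1) (ha : dot3 a u = 0)
    (hw : dot3 w u = 0) (hp : dot3 p u = 0) :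
    projPerp u (crossProduct a w + crossProduct u d - p) =
      crossProduct u (projPerp u (d - q)) ↔ p = crossProduct u q := by
  have h1 : projPerp u (crossProduct a w + crossProduct u d - p) = crossProduct u d - p := by
    ext i
    simp only [dot3, Fin.sum_univ_three] at hu ha hw hp
    fin_cases i <;> simp [projPerp, dot3, Fin.sum_univ_three, cross_apply, Matrix.vecHead, Matrix.vecTail]
    · linear_combination (-(a 1 * w 2 - a 2 * w 1)) * hu + (u 1 * w 2 - u 2 * w 1) * ha
        - (u 1 * a 2 - u 2 * a 1) * hw + u 0 * hp
    · linear_combination (-(a 2 * w 0 - a 0 * w 2)) * hu + (u 2 * w 0 - u 0 * w 2) * ha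
        - (u 2 * a 0 - u 0 * a 2) * hw + u 1 * hp
    · linear_combination (-(a 0 * w 1 - a 1 * w 0)) * hu + (u 0 * w 1 - u 1 * w 0) * ha
        - (u 0 * a 1 - u 1 * a 0) * hw + u 2 * hp
  have h2 : crossProduct u (projPerp u (d - q)) = crossProduct u d - crossProduct u q := by
    simp [projPerp]
  rw [h1, h2, sub_right_inj]

theorem aux_point (A : Set (Fin 3 → ℝ)) (hA : IsOpen A)
    (U : (Fin 3 → ℝ) → (Fin 3 → ℝ))
    (hU : ContDiffOn ℝ (⊤ : ℕ∞) U A)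
    (hUnit : ∀ x ∈ A, dot3 (U x) (U x) = 1)
    (X : (Fin 3 → ℝ) → (Fin 3 → ℝ)) (hX : ContDiffOn ℝ (⊤ : ℕ∞) X A)
    (x : Fin 3 → ℝ) (hx : x ∈ A) (hXU : dot3 (X x) (U x) = 0) :
    projPerp (U x) (bracket3 U (fun y => crossProduct (U y) (X y)) x) =
      crossProduct (U x) (projPerp (U x) (bracket3 U X x)) ↔
    fderiv ℝ U x (crossProduct (U x) (X x)) = crossProduct (U x) (fderiv ℝ U x (X x)) := by
  have hUd : DifferentiableAt ℝ U x :=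
    (hU.contDiffAt (hA.mem_nhds hx)).differentiableAt (by simp)
  have hXd : DifferentiableAt ℝ X x :=
    (hX.contDiffAt (hA.mem_nhds hx)).differentiableAt (by simp)
  unfold bracket3
  rw [aux_fderiv_cross U X x _ hUd hXd]
  exact aux_alg _ _ _ _ _ _ (hUnit x hx) (aux_perp A hA U hUnit x hx hUd _) hXU
    (aux_perp A hA U hUnit x hx hUd _)


/-- Proposition 1.1: for a smooth unit vector field `U` on an open subset of `ℝ³`, the
vanishing of the projected Lie derivative of the rotation `J^⊥ = U × ·` along `U` is
equivalent to `(DU)ₓ(U × v) = U × (DU)ₓ(v)` for all `v ⊥ U`. -/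
theorem conformal_foliation_characterization
    (A : Set (Fin 3 → ℝ)) (hA : IsOpen A)
    (U : (Fin 3 → ℝ) → (Fin 3 → ℝ))
    (hU : ContDiffOn ℝ (⊤ : ℕ∞) U A)
    (hUnit : ∀ x ∈ A, dot3 (U x) (U x) = 1) :
    (∀ X : (Fin 3 → ℝ) → (Fin 3 → ℝ), ContDiffOn ℝ (⊤ : ℕ∞) X A →
        (∀ x ∈ A, dot3 (X x) (U x) = 0) →
        ∀ x ∈ A,
          projPerp (U x) (bracket3 U (fun y => crossProduct (U y) (X y)) x) =
            crossProduct (U x) (projPerp (U x) (bracket3 U X x))) ↔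
    (∀ x ∈ A, ∀ v : Fin 3 → ℝ, dot3 v (U x) = 0 →
        fderiv ℝ U x (crossProduct (U x) v) = crossProduct (U x) (fderiv ℝ U x v)) := by

  constructor
  · intro H x hx v hv
    have hc : ∀ i, ContDiffOn ℝ (⊤ : ℕ∞) (fun y => U y i) A := fun i => contDiffOn_pi.1 hU i
    have hX : ContDiffOn ℝ (⊤ : ℕ∞) (fun y => projPerp (U y) v) A := by
      have h0 := hc 0
      have h1 := hc 1
      have h2 := hc 2
      simp only [projPerp, dot3, Fin.sum_univ_three]
      fun_prop
    have hXU : ∀ y ∈ A, dot3 (projPerp (U y) v) (U y) = 0 := by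
      intro y hy
      have h := hUnit y hy
      simp [projPerp, dot3, Fin.sum_univ_three] at h ⊢
      linear_combination (-(v 0 * U y 0 + v 1 * U y 1 + v 2 * U y 2)) * h
    have h := (aux_point A hA U hU hUnit _ hX x hx (hXU x hx)).1 (H _ hX hXU x hx)
    have e : projPerp (U x) v = v := by simp [projPerp, hv]
    simpa only [e] using h
  · intro H X hX hXU x hx
    exact (aux_point A hA U hU hUnit X hX x hx (hXU x hx)).2 (H x hx _ (hXU x hx))
end

section
/- Let U be an open subset of ℝ⁴ and let B denote the complex-bilinear extension to ℂ⁴ of the Minkowski inner product: B(u,v) = −u₀v₀ + u₁v₁ + u₂v₂ + u₃v₃ for u, v ∈ ℂ⁴. For a differentiable map F on U and ζ = a + ib with a, b ∈ ℝ⁴, write D_ζF(x) = (DF)_x(a) + i·(DF)_x(b) (the Fréchet derivative extended complex-linearly). Let w : U → ℝ⁴ be C², Z : U → ℂ⁴ be C¹, and λ : U → ℂ be such that for all x ∈ U: (a) B(w(x), w(x)) = 0; (b) (Dw)_x(w(x)) = 0; (c) D_{w(x)}Z(x) − D_{Z(x)}w(x) = λ(x)·w(x) (with w(x) viewed in ℂ⁴).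 Define h : U → ℂ by h(x) = B(D_{Z(x)}w(x), Z(x)). Then for every x ∈ U, (Dh)_x(w(x)) = B(D_{Z(x)}w(x), D_{Z(x)}w(x)). -/
noncomputable section

/-- Complexification of a vector of `ℝ⁴`, viewed in `ℂ⁴`. -/
def cx (u : Fin 4 → ℝ) : Fin 4 → ℂ := fun i => (u i : ℂ)

/-- The complex-bilinear extension to `ℂ⁴` of the Minkowski inner product:
`B(u,v) = −u₀v₀ + u₁v₁ + u₂v₂ + u₃v₃`. -/
def minkC (u v : Fin 4 → ℂ) : ℂ := -(u 0 * v 0) + u 1 * v 1 + u 2 * v 2 + u 3 * v 3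

/-- Directional derivative of an `ℝ⁴`-valued map in a complexified direction `ζ = a + ib`:
`D_ζ w(x) = (Dw)ₓ(a) + i (Dw)ₓ(b)`, viewed in `ℂ⁴`. -/
def Dc (w : (Fin 4 → ℝ) → (Fin 4 → ℝ)) (ζ : Fin 4 → ℂ) (x : Fin 4 → ℝ) : Fin 4 → ℂ :=
  cx (fderiv ℝ w x (fun i => (ζ i).re)) + Complex.I • cx (fderiv ℝ w x (fun i => (ζ i).im))

def cxL : (Fin 4 → ℝ) →L[ℝ] (Fin 4 → ℂ) :=
  ContinuousLinearMap.pi fun i => Complex.ofRealCLM.comp (ContinuousLinearMap.proj i)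

def reL : (Fin 4 → ℂ) →L[ℝ] (Fin 4 → ℝ) :=
  ContinuousLinearMap.pi fun i => Complex.reCLM.comp (ContinuousLinearMap.proj i)

def imL : (Fin 4 → ℂ) →L[ℝ] (Fin 4 → ℝ) :=
  ContinuousLinearMap.pi fun i => Complex.imCLM.comp (ContinuousLinearMap.proj i)

lemma cxL_apply (u : Fin 4 → ℝ) : cxL u = cx u := rfl

lemma reL_apply (u : Fin 4 → ℂ) : reL u = fun i => (u i).re := rfl

lemma imL_apply (u : Fin 4 → ℂ) : imL u = fun i => (u i).im := rfl

lemma minkC_hasFDerivAt {u v : (Fin 4 → ℝ) → (Fin 4 → ℂ)}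
    {u' v' : (Fin 4 → ℝ) →L[ℝ] (Fin 4 → ℂ)} {x : Fin 4 → ℝ}
    (hu : HasFDerivAt u u' x) (hv : HasFDerivAt v v' x) :
    ∃ F : (Fin 4 → ℝ) →L[ℝ] ℂ, HasFDerivAt (fun y => minkC (u y) (v y)) F x ∧
      ∀ t, F t = minkC (u' t) (v x) + minkC (u x) (v' t) := by
  have hu' := fun i => (hasFDerivAt_pi'.1 hu) i
  have hv' := fun i => (hasFDerivAt_pi'.1 hv) i
  have h := fun i => (hu' i).mul (hv' i)
  refine ⟨_, (((h 0).neg.add (h 1)).add (h 2)).add (h 3), fun t => ?_⟩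
  simp [minkC]
  ring

/-- The key computation in Lemma 3.2: for a null geodesic field `w` and a basic complexified
screen field `Z`, the derivative of `h = B(D_Z w, Z)` along `w` equals `B(D_Z w, D_Z w)`. -/
theorem shear_free_propagation
    (U : Set (Fin 4 → ℝ)) (hU : IsOpen U)
    (w : (Fin 4 → ℝ) → (Fin 4 → ℝ)) (hw : ContDiffOn ℝ 2 w U)
    (Z : (Fin 4 → ℝ) → (Fin 4 → ℂ)) (hZ : ContDiffOn ℝ 1 Z U)
    (lam : (Fin 4 → ℝ) → ℂ)
    (hnull : ∀ x ∈ U, minkC (cx (w x)) (cx (w x)) = 0)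
    (hgeo : ∀ x ∈ U, fderiv ℝ w x (w x) = 0)
    (hbasic : ∀ x ∈ U, fderiv ℝ Z x (w x) - Dc w (Z x) x = lam x • cx (w x)) :
    ∀ x ∈ U,
      fderiv ℝ (fun y => minkC (Dc w (Z y) y) (Z y)) x (w x) =
        minkC (Dc w (Z x) x) (Dc w (Z x) x) := by
  intro x hx
  have hUx : U ∈ nhds x := hU.mem_nhds hx
  have hwc : ContDiffAt ℝ 2 w x := hw.contDiffAt hUx
  have hZd : HasFDerivAt Z (fderiv ℝ Z x) x :=
    ((hZ.contDiffAt hUx).differentiableAt (by norm_num)).hasFDerivAt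
  have hwd : HasFDerivAt w (fderiv ℝ w x) x :=
    (hwc.differentiableAt (by norm_num)).hasFDerivAt
  have hWd : HasFDerivAt (fderiv ℝ w) (fderiv ℝ (fderiv ℝ w) x) x :=
    ((hwc.fderiv_right (m := 1) (by norm_num)).differentiableAt (by norm_num)).hasFDerivAt
  have hsymm : IsSymmSndFDerivAt ℝ w x := hwc.isSymmSndFDerivAt (by simp)
  have hg : ∀ v, fderiv ℝ (fderiv ℝ w) x (w x) v = - fderiv ℝ w x (fderiv ℝ w x v) := by
    intro v
    have h1 := hWd.clm_apply hwd
    have h2 : HasFDerivAt (fun y => fderiv ℝ w y (w y))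
        (0 : (Fin 4 → ℝ) →L[ℝ] (Fin 4 → ℝ)) x := by
      refine (hasFDerivAt_const (0 : Fin 4 → ℝ) x).congr_of_eventuallyEq ?_
      filter_upwards [hUx] with y hy using hgeo y hy
    have h3 := congrArg (fun F => F v) (h1.unique h2)
    simp at h3
    rw [hsymm.eq (w x) v]
    rw [add_comm] at h3
    exact eq_neg_of_add_eq_zero_left h3
  have hn : ∀ v, minkC (cx (fderiv ℝ w x v)) (cx (w x)) = 0 := by
    intro v
    have hc : HasFDerivAt (fun y => cx (w y)) (cxL.comp (fderiv ℝ w x)) x :=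
      cxL.hasFDerivAt.comp x hwd
    obtain ⟨F, hF, hFt⟩ := minkC_hasFDerivAt hc hc
    have h2 : HasFDerivAt (fun y => minkC (cx (w y)) (cx (w y)))
        (0 : (Fin 4 → ℝ) →L[ℝ] ℂ) x := by
      refine (hasFDerivAt_const (0 : ℂ) x).congr_of_eventuallyEq ?_
      filter_upwards [hUx] with y hy using hnull y hy
    have h3 := hFt v
    rw [hF.unique h2] at h3
    simp only [ContinuousLinearMap.comp_apply, cxL_apply, ContinuousLinearMap.zero_apply] at h3
    simp only [minkC] at h3 ⊢
    linear_combination (-1 / 2 : ℂ) * h3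
  have hb : fderiv ℝ Z x (w x) = Dc w (Z x) x + lam x • cx (w x) :=
    sub_eq_iff_eq_add'.1 (hbasic x hx)
  have hbr : reL (fderiv ℝ Z x (w x)) = fderiv ℝ w x (reL (Z x)) + (lam x).re • w x := by
    rw [hb]; ext i; simp [reL_apply, Dc, cx]
  have hbi : imL (fderiv ℝ Z x (w x)) = fderiv ℝ w x (imL (Z x)) + (lam x).im • w x := by
    rw [hb]; ext i; simp [imL_apply, Dc, cx]
  have ha := hWd.clm_apply (reL.hasFDerivAt.comp x hZd)
  have hbb := hWd.clm_apply (imL.hasFDerivAt.comp x hZd)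
  have hG := (cxL.hasFDerivAt.comp x ha).add
    ((cxL.hasFDerivAt.comp x hbb).const_smul Complex.I)
  have hG' : HasFDerivAt (fun y => Dc w (Z y) y) _ x := hG
  obtain ⟨F, hF, hFt⟩ := minkC_hasFDerivAt hG' hZd
  rw [hF.fderiv, hFt]
  have hz : ∀ t, minkC 0 t = 0 := fun t => by simp [minkC]
  have e1 : fderiv ℝ w x (reL (fderiv ℝ Z x (w x))) +
      fderiv ℝ (fderiv ℝ w) x (w x) (reL (Z x)) = 0 := by
    rw [hbr, hg, map_add, map_smul, hgeo x hx]; simp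
  have e2 : fderiv ℝ w x (imL (fderiv ℝ Z x (w x))) +
      fderiv ℝ (fderiv ℝ w) x (w x) (imL (Z x)) = 0 := by
    rw [hbi, hg, map_add, map_smul, hgeo x hx]; simp
  simp only [ContinuousLinearMap.add_apply, ContinuousLinearMap.comp_apply,
    ContinuousLinearMap.smul_apply, ContinuousLinearMap.flip_apply, Function.comp_apply, e1, e2,
    map_zero, smul_zero, add_zero, hz, zero_add]
  rw [hb]
  have n1 := hn (reL (Z x))
  have n2 := hn (imL (Z x))
  simp only [reL_apply, imL_apply] at n1 n2
  simp only [minkC, Dc, Pi.add_apply, Pi.smul_apply, smul_eq_mul] at n1 n2 ⊢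
  linear_combination lam x * n1 + lam x * Complex.I * n2

end
end

section
/- Let A³ be an open subset of ℝ³ (coordinates (x₁,x₂,x₃)) and let μ₀ : A³ → ℂ be real-analytic and satisfy ∂_{q̄₂}μ₀ − i·μ₀·∂₁μ₀ + μ₀²·∂_{q₂}μ₀ = 0 on A³, where ∂_{q₂} = ½(∂₂ − i∂₃) and ∂_{q̄₂} = ½(∂₂ + i∂₃). Then there exist an open set A^M ⊆ ℝ⁴ (coordinates (t,x₁,x₂,x₃)) with A^M ∩ {t = 0} = {0} × A³, and a real-analytic map μ : A^M → ℂ with μ(0,x) = μ₀(x) for all x ∈ A³, satisfying on A^M the equations ∂_vμ + i·μ·∂_{q₂}μ = 0 and ∂_{q̄₂}μ − i·μ·∂_wμ = 0, where ∂_v = ½(∂_t + ∂₁) and ∂_w = ½(∂₁ − ∂_t). Moreover, any two real-analytic maps satisfying these two equations on open neighbourhoods of {0} × A³ in ℝ⁴ and restricting to μ₀ on {0} × A³ agree on some open neighbourhood of {0} × A³. -/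
noncomputable section

/-- Partial derivative in the `i`-th coordinate direction of a map `ℝ³ → ℂ`. -/
def pd3 (i : Fin 3) (f : (Fin 3 → ℝ) → ℂ) (x : Fin 3 → ℝ) : ℂ :=
  fderiv ℝ f x (Pi.single i 1)

/-- Partial derivative in the `i`-th coordinate direction of a map `ℝ⁴ → ℂ`;
on `ℝ⁴` the coordinates are `(t, x₁, x₂, x₃)` with `t` the coordinate of index `0`. -/
def pd4 (i : Fin 4) (f : (Fin 4 → ℝ) → ℂ) (y : Fin 4 → ℝ) : ℂ :=
  fderiv ℝ f y (Pi.single i 1)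

/-- The shear-free ray congruence equations
`∂_v μ + i μ ∂_{q₂} μ = 0` and `∂_{q̄₂} μ − i μ ∂_w μ = 0`, where
`∂_v = ½(∂_t + ∂₁)`, `∂_w = ½(∂₁ − ∂_t)`, `∂_{q₂} = ½(∂₂ − i∂₃)`, `∂_{q̄₂} = ½(∂₂ + i∂₃)`. -/
def SFREq (μ : (Fin 4 → ℝ) → ℂ) (y : Fin 4 → ℝ) : Prop :=
  (pd4 0 μ y + pd4 1 μ y) / 2
      + Complex.I * μ y * ((pd4 2 μ y - Complex.I * pd4 3 μ y) / 2) = 0 ∧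
  (pd4 2 μ y + Complex.I * pd4 3 μ y) / 2
      - Complex.I * μ y * ((pd4 1 μ y - pd4 0 μ y) / 2) = 0

/-- Inclusion of `ℝ³` as the slice `{t = 0}` of `ℝ⁴`. -/
def slice0 (x : Fin 3 → ℝ) : Fin 4 → ℝ := Fin.cons 0 x

open Topology

/-- complexified coefficient -/
def cplxSeries (p : FormalMultilinearSeries ℝ (Fin 3 → ℝ) ℂ) :
    FormalMultilinearSeries ℂ (Fin 3 → ℂ) ℂ := fun n =>
  ∑ c : Fin n → Fin 3,
    ((ContinuousMultilinearMap.mkPiAlgebra ℂ (Fin n) ℂ).compContinuousLinearMap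
      (fun k => (ContinuousLinearMap.proj (c k) : (Fin 3 → ℂ) →L[ℂ] ℂ))).smulRight
      (p n fun k => Pi.single (c k) 1)

lemma cplxSeries_apply (p : FormalMultilinearSeries ℝ (Fin 3 → ℝ) ℂ) (n : ℕ)
    (z : Fin n → Fin 3 → ℂ) :
    cplxSeries p n z = ∑ c : Fin n → Fin 3, (∏ k, z k (c k)) * (p n fun k => Pi.single (c k) 1) := by
  simp [cplxSeries]

lemma cplxSeries_norm (p : FormalMultilinearSeries ℝ (Fin 3 → ℝ) ℂ) (n : ℕ) :
    ‖cplxSeries p n‖ ≤ 3 ^ n * ‖p n‖ := by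
  apply ContinuousMultilinearMap.opNorm_le_bound (by positivity)
  intro z
  rw [cplxSeries_apply]
  have : ∀ c ∈ (Finset.univ : Finset (Fin n → Fin 3)),
      ‖(∏ k, z k (c k)) * (p n fun k => Pi.single (c k) 1)‖ ≤ ‖p n‖ * ∏ k, ‖z k‖ := by
    intro c _
    rw [norm_mul, mul_comm]
    have h1 : ‖p n fun k => (Pi.single (c k) 1 : Fin 3 → ℝ)‖ ≤ ‖p n‖ := by
      have := (p n).le_opNorm (fun k => (Pi.single (c k) 1 : Fin 3 → ℝ))
      simpa [Pi.norm_single] using this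
    have h2 : ‖∏ k, z k (c k)‖ ≤ ∏ k, ‖z k‖ := by
      rw [norm_prod]
      exact Finset.prod_le_prod (fun _ _ => norm_nonneg _) (fun k _ => norm_le_pi_norm (z k) (c k))
    gcongr
  refine (norm_sum_le_of_le _ this).trans ?_
  simp [mul_assoc]

lemma cplxSeries_ofReal (p : FormalMultilinearSeries ℝ (Fin 3 → ℝ) ℂ) (n : ℕ)
    (x : Fin 3 → ℝ) :
    (cplxSeries p n fun _ => fun i => (x i : ℂ)) = p n fun _ => x := by
  rw [cplxSeries_apply]
  have hx : x = ∑ i, x i • (Pi.single i 1 : Fin 3 → ℝ) := by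
    ext j; simp [Finset.sum_apply, Pi.single_apply]
  conv_rhs => rw [hx]
  rw [(p n).map_sum]
  refine Finset.sum_congr rfl fun c _ => ?_
  rw [(p n).map_smul_univ (fun k => x (c k)) (fun k => Pi.single (c k) 1)]
  simp

lemma complexify {f : (Fin 3 → ℝ) → ℂ} {x : Fin 3 → ℝ} (h : AnalyticAt ℝ f x) :
    ∃ M : (Fin 3 → ℂ) → ℂ, AnalyticAt ℂ M (fun i => (x i : ℂ)) ∧
      ∀ᶠ y in 𝓝 x, M (fun i => (y i : ℂ)) = f y := by
  obtain ⟨p, hp⟩ := h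
  obtain ⟨r, hr⟩ := hp
  obtain ⟨s, hs0, hs⟩ := ENNReal.lt_iff_exists_nnreal_btwn.1 hr.r_pos
  have hs0' : 0 < s := by exact_mod_cast hs0
  obtain ⟨C, hC, hb⟩ := p.norm_mul_pow_le_of_lt_radius (hs.trans_le hr.r_le)
  have hrad : 0 < (cplxSeries p).radius := by
    have : ((s / 3 : NNReal) : ENNReal) ≤ (cplxSeries p).radius := by
      apply FormalMultilinearSeries.le_radius_of_bound _ C
      intro n
      calc _ ≤ (3 ^ n * ‖p n‖) * ((s / 3 : NNReal) : ℝ) ^ n := by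
            gcongr; exact cplxSeries_norm p n
        _ = ‖p n‖ * (s : ℝ) ^ n := by
            push_cast; rw [div_pow]; field_simp
        _ ≤ C := hb n
    refine lt_of_lt_of_le ?_ this
    exact_mod_cast (by positivity : 0 < s / 3)
  have hq := (cplxSeries p).hasFPowerSeriesOnBall hrad
  have hq2 := hq.comp_sub (fun i => (x i : ℂ))
  rw [zero_add] at hq2
  refine ⟨_, hq2.analyticAt, ?_⟩
  filter_upwards [hr.hasFPowerSeriesAt.eventually_hasSum_sub] with y hy
  have : (cplxSeries p).sum (fun i => ((y - x) i : ℂ)) = f y := by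
    rw [← hy.tsum_eq]
    unfold FormalMultilinearSeries.sum
    exact tsum_congr fun n => cplxSeries_ofReal p n (y - x)
  rw [← this]
  congr 1
  ext i; simp

lemma real_identity {G : (Fin 3 → ℂ) → ℂ} {x : Fin 3 → ℝ}
    (hG : AnalyticAt ℂ G (fun i => (x i : ℂ)))
    (h : ∀ᶠ y in 𝓝 x, G (fun i => (y i : ℂ)) = 0) :
    ∀ᶠ z in 𝓝 (fun i => (x i : ℂ)), G z = 0 := by
  obtain ⟨r1, hr1, h1⟩ := Metric.eventually_nhds_iff_ball.1 hG.eventually_analyticAt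
  obtain ⟨r2, hr2, h2⟩ := Metric.eventually_nhds_iff_ball.1 h
  set r := min r1 r2 with hr
  have hrp : 0 < r := lt_min hr1 hr2
  have key : ∀ (i : Fin 3) (z : Fin 3 → ℂ), z ∈ Metric.ball (fun i => (x i : ℂ)) r →
      (∀ s : ℝ, |s - x i| < r → G (Function.update z i (s : ℂ)) = 0) → G z = 0 := by
    intro i z hz hs
    have hup : ∀ w ∈ Metric.ball (x i : ℂ) r,
        Function.update z i w ∈ Metric.ball (fun i => (x i : ℂ)) r := by
      intro w hw
      rw [Metric.mem_ball, dist_pi_lt_iff hrp] at hz ⊢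
      intro j
      by_cases hj : j = i
      · subst hj; simpa using hw
      · simpa [hj] using hz j
    have han : AnalyticOnNhd ℂ (fun w => G (Function.update z i w)) (Metric.ball (x i : ℂ) r) := by
      intro w hw
      have hu : AnalyticAt ℂ (fun w : ℂ => Function.update z i w) w := by
        rw [analyticAt_pi_iff]
        intro j
        by_cases hj : j = i
        · subst hj; simp only [Function.update_self]; exact analyticAt_id
        · simpa [hj] using analyticAt_const
      exact AnalyticAt.fun_comp (h1 _ (Metric.ball_subset_ball (min_le_left _ _) (hup w hw))) hu
    have hfr : ∃ᶠ w in 𝓝[≠] (x i : ℂ), G (Function.update z i w) = 0 := by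
      have ht : Filter.Tendsto (fun s : ℝ => (s : ℂ)) (𝓝[≠] (x i)) (𝓝[≠] (x i : ℂ)) := by
        apply Complex.continuous_ofReal.continuousAt.continuousWithinAt.tendsto_nhdsWithin
        intro s hs; simpa using hs
      refine ht.frequently (Filter.Eventually.frequently ?_)
      filter_upwards [nhdsWithin_le_nhds (Metric.ball_mem_nhds (x i) hrp)] with s hs'
      exact hs s (by simpa [Real.dist_eq] using hs')
    have := han.eqOn_zero_of_preconnected_of_frequently_eq_zero
      (convex_ball _ _).isPreconnected (Metric.mem_ball_self hrp) hfr
    have hzi : z i ∈ Metric.ball (x i : ℂ) r := by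
      rw [Metric.mem_ball, dist_pi_lt_iff hrp] at hz
      exact hz i
    simpa using this hzi
  have hupr : ∀ (i : Fin 3) (z : Fin 3 → ℂ), z ∈ Metric.ball (fun i => (x i : ℂ)) r →
      ∀ s : ℝ, |s - x i| < r → Function.update z i (s : ℂ) ∈ Metric.ball (fun i => (x i : ℂ)) r := by
    intro i z hz s hs
    rw [Metric.mem_ball, dist_pi_lt_iff hrp] at hz ⊢
    intro j
    by_cases hj : j = i
    · subst hj
      simp only [Function.update_self, Complex.dist_eq, ← Complex.ofReal_sub, Complex.norm_real]
      simpa using hs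
    · simpa [hj] using hz j
  filter_upwards [Metric.ball_mem_nhds _ hrp] with z hz
  refine key 0 z hz fun s0 h0 => key 1 _ (hupr 0 _ hz _ h0) fun s1 hs1 =>
    key 2 _ (hupr 1 _ (hupr 0 _ hz _ h0) _ hs1) fun s2 hs2 => ?_
  have hb : ![s0, s1, s2] ∈ Metric.ball x r2 := by
    rw [Metric.mem_ball, dist_pi_lt_iff hr2]
    have hle : r ≤ r2 := min_le_right _ _
    intro j
    fin_cases j <;> simp [Real.dist_eq] <;> linarith
  rw [← h2 _ hb]
  congr 1
  ext j
  fin_cases j <;> simp [Function.update]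

/-- order of vanishing along the slice -/
def Van (U : Set (Fin 4 → ℝ)) : ℕ → ((Fin 4 → ℝ) → ℂ) → Prop
  | 0, f => AnalyticOnNhd ℝ f U
  | k + 1, f => AnalyticOnNhd ℝ f U ∧ (∀ y ∈ U, y 0 = 0 → f y = 0) ∧ Van U k (pd4 0 f)

lemma pd4_analytic {U : Set (Fin 4 → ℝ)} {f : (Fin 4 → ℝ) → ℂ}
    (hf : AnalyticOnNhd ℝ f U) (i : Fin 4) : AnalyticOnNhd ℝ (pd4 i f) U := by
  intro y hy
  have := hf.fderiv y hy
  exact (ContinuousLinearMap.apply ℝ ℂ (Pi.single i 1 : Fin 4 → ℝ)).analyticAt _ |>.fun_comp this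

lemma pd4_congr {U : Set (Fin 4 → ℝ)} (hU : IsOpen U) {f g : (Fin 4 → ℝ) → ℂ}
    (h : ∀ y ∈ U, f y = g y) (i : Fin 4) : ∀ y ∈ U, pd4 i f y = pd4 i g y := by
  intro y hy
  have : f =ᶠ[𝓝 y] g := by filter_upwards [hU.mem_nhds hy] with z hz using h z hz
  simp only [pd4, this.fderiv_eq]

lemma Van.analytic {U : Set (Fin 4 → ℝ)} {f : (Fin 4 → ℝ) → ℂ} {k : ℕ}
    (h : Van U k f) : AnalyticOnNhd ℝ f U := by
  cases k with
  | zero => exact h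
  | succ k => exact h.1

lemma Van.congr {U : Set (Fin 4 → ℝ)} (hU : IsOpen U) {k : ℕ} :
    ∀ {f g : (Fin 4 → ℝ) → ℂ}, (∀ y ∈ U, f y = g y) → Van U k f → Van U k g := by
  induction k with
  | zero => exact fun h hf => AnalyticOnNhd.congr hU hf h
  | succ k ih =>
    intro f g h hf
    exact ⟨hf.1.congr hU h, fun y hy h0 => (h y hy) ▸ hf.2.1 y hy h0,
      ih (pd4_congr hU h 0) hf.2.2⟩

lemma Van.pred {U : Set (Fin 4 → ℝ)} {k : ℕ} :
    ∀ {f : (Fin 4 → ℝ) → ℂ}, Van U (k + 1) f → Van U k f := by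
  induction k with
  | zero => exact fun h => h.1
  | succ k ih => exact fun h => ⟨h.1, h.2.1, ih h.2.2⟩

lemma pd4_add {f g : (Fin 4 → ℝ) → ℂ} {y : Fin 4 → ℝ} (hf : AnalyticAt ℝ f y)
    (hg : AnalyticAt ℝ g y) (i : Fin 4) :
    pd4 i (fun z => f z + g z) y = pd4 i f y + pd4 i g y := by
  simp [pd4, fderiv_fun_add hf.differentiableAt hg.differentiableAt]

lemma pd4_sub {f g : (Fin 4 → ℝ) → ℂ} {y : Fin 4 → ℝ} (hf : AnalyticAt ℝ f y)
    (hg : AnalyticAt ℝ g y) (i : Fin 4) :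
    pd4 i (fun z => f z - g z) y = pd4 i f y - pd4 i g y := by
  simp [pd4, fderiv_fun_sub hf.differentiableAt hg.differentiableAt]

lemma pd4_mul {f g : (Fin 4 → ℝ) → ℂ} {y : Fin 4 → ℝ} (hf : AnalyticAt ℝ f y)
    (hg : AnalyticAt ℝ g y) (i : Fin 4) :
    pd4 i (fun z => f z * g z) y = f y * pd4 i g y + pd4 i f y * g y := by
  simp [pd4, fderiv_fun_mul hf.differentiableAt hg.differentiableAt]
  ring

lemma Van.add {U : Set (Fin 4 → ℝ)} (hU : IsOpen U) {k : ℕ} :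
    ∀ {f g : (Fin 4 → ℝ) → ℂ}, Van U k f → Van U k g → Van U k (fun y => f y + g y) := by
  induction k with
  | zero => exact fun hf hg => AnalyticOnNhd.add hf hg
  | succ k ih =>
    intro f g hf hg
    refine ⟨hf.1.add hg.1, fun y hy h0 => by simp [hf.2.1 y hy h0, hg.2.1 y hy h0], ?_⟩
    exact Van.congr hU (fun y hy => (pd4_add (hf.1 y hy) (hg.1 y hy) 0).symm) (ih hf.2.2 hg.2.2)

lemma Van.mul {U : Set (Fin 4 → ℝ)} (hU : IsOpen U) {k : ℕ} :
    ∀ {a f : (Fin 4 → ℝ) → ℂ}, AnalyticOnNhd ℝ a U → Van U k f →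
      Van U k (fun y => a y * f y) := by
  induction k with
  | zero => exact fun hf hg => AnalyticOnNhd.mul hf hg
  | succ k ih =>
    intro a f ha hf
    refine ⟨ha.mul hf.1, fun y hy h0 => by simp [hf.2.1 y hy h0], ?_⟩
    exact Van.congr hU (fun y hy => (pd4_mul (ha y hy) (hf.1 y hy) 0).symm)
      (Van.add hU (ih ha hf.2.2) (ih (pd4_analytic ha 0) hf.pred))

lemma pd4_comm {f : (Fin 4 → ℝ) → ℂ} {y : Fin 4 → ℝ} (hf : AnalyticAt ℝ f y) (i j : Fin 4) :
    pd4 i (pd4 j f) y = pd4 j (pd4 i f) y := by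
  have hs : IsSymmSndFDerivAt ℝ f y :=
    (hf.contDiffAt (n := ⊤)).isSymmSndFDerivAt (by simp)
  have hd : DifferentiableAt ℝ (fderiv ℝ f) y := hf.fderiv.differentiableAt
  have key : ∀ i j : Fin 4, pd4 i (pd4 j f) y
      = fderiv ℝ (fderiv ℝ f) y (Pi.single i 1) (Pi.single j 1) := by
    intro i j
    unfold pd4
    rw [fderiv_clm_apply hd (differentiableAt_const _)]
    simp
  rw [key, key]
  exact hs _ _

lemma Van.pd {U : Set (Fin 4 → ℝ)} (hU : IsOpen U) {k : ℕ} {i : Fin 4} (hi : i ≠ 0) :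
    ∀ {f : (Fin 4 → ℝ) → ℂ}, Van U k f → Van U k (pd4 i f) := by
  induction k with
  | zero => exact fun hf => pd4_analytic hf i
  | succ k ih =>
    intro f hf
    refine ⟨pd4_analytic hf.1 i, ?_, ?_⟩
    · intro y hy h0
      have hd := (hf.1 y hy).differentiableAt
      have h1 := hd.lineDeriv_eq_fderiv (v := (Pi.single i 1 : Fin 4 → ℝ))
      rw [pd4, ← h1, lineDeriv]
      have hc : Filter.Tendsto (fun t : ℝ => y + t • (Pi.single i 1 : Fin 4 → ℝ)) (𝓝 0) (𝓝 y) := by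
        have : Continuous (fun t : ℝ => y + t • (Pi.single i 1 : Fin 4 → ℝ)) := by fun_prop
        simpa using this.tendsto 0
      have : (fun t : ℝ => f (y + t • (Pi.single i 1 : Fin 4 → ℝ))) =ᶠ[𝓝 0] fun _ => 0 := by
        filter_upwards [hc.eventually (hU.mem_nhds hy)] with t ht
        exact hf.2.1 _ ht (by simp [h0, Ne.symm hi])
      rw [this.deriv_eq]; simp
    · exact Van.congr hU (fun y hy => (pd4_comm (hf.1 y hy) 0 i).symm) (ih hf.2.2)

lemma line_hasDeriv (y : Fin 4 → ℝ) (t : ℝ) :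
    HasDerivAt (fun s : ℝ => Function.update y 0 s) (Pi.single 0 1 : Fin 4 → ℝ) t := by
  rw [hasDerivAt_pi]
  intro j
  by_cases hj : j = 0
  · subst hj; simp only [Function.update_self, Pi.single_eq_same]; exact hasDerivAt_id t
  · simpa [hj] using hasDerivAt_const t (y j)

lemma Van.iter {U : Set (Fin 4 → ℝ)} (hU : IsOpen U) {y : Fin 4 → ℝ}
    (hy : Function.update y 0 0 ∈ U) {k : ℕ} :
    ∀ {f : (Fin 4 → ℝ) → ℂ}, Van U (k + 1) f →
      iteratedDeriv k (fun s : ℝ => f (Function.update y 0 s)) 0 = 0 := by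
  induction k with
  | zero => intro f hf; simpa using hf.2.1 _ hy (by simp)
  | succ k ih =>
    intro f hf
    rw [iteratedDeriv_succ', ← ih hf.2.2]
    apply Filter.EventuallyEq.iteratedDeriv_eq
    filter_upwards [(line_hasDeriv y 0).continuousAt.eventually (hU.mem_nhds hy)] with s hs
    have := (hf.1 _ hs).differentiableAt.hasFDerivAt.comp_hasDerivAt s (line_hasDeriv y s)
    exact this.deriv

lemma eq_zero_of_van {U : Set (Fin 4 → ℝ)} (hU : IsOpen U) (hc : Convex ℝ U)
    (h0 : ∀ y ∈ U, Function.update y 0 0 ∈ U) {f : (Fin 4 → ℝ) → ℂ}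
    (hf : ∀ k, Van U k f) : ∀ y ∈ U, f y = 0 := by
  intro y hy
  have han : AnalyticOnNhd ℝ (fun s : ℝ => f (Function.update y 0 s))
      {s | Function.update y 0 s ∈ U} := by
    intro w hw
    have hu : AnalyticAt ℝ (fun w : ℝ => Function.update y 0 w) w := by
      rw [analyticAt_pi_iff]
      intro j
      by_cases hj : j = 0
      · subst hj; simp only [Function.update_self]; exact analyticAt_id
      · simpa [hj] using analyticAt_const
    exact AnalyticAt.fun_comp ((hf 0).analytic _ hw) hu
  have hconv : Convex ℝ {s : ℝ | Function.update y 0 s ∈ U} := by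
    intro a ha b hb p q hp hq hpq
    have := hc ha hb hp hq hpq
    simp only [Set.mem_ofPred_eq]
    convert this using 1
    ext j
    by_cases hj : j = 0
    · subst hj; simp
    · simp [hj]; rw [← add_mul, hpq, one_mul]
  have hz : (fun s : ℝ => f (Function.update y 0 s)) =ᶠ[𝓝 0] 0 := by
    obtain ⟨p, r, hp⟩ := han 0 (h0 y hy)
    have hp0 : p = 0 := by
      ext1 n
      rw [FormalMultilinearSeries.zero_apply, FormalMultilinearSeries.coeff_eq_zero.symm]
      have h1 := hp.factorial_smul 1 n
      rw [← iteratedDeriv_eq_iteratedFDeriv, Van.iter hU (h0 y hy) (hf (n + 1))] at h1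
      have h2 := (smul_eq_zero.1 h1).resolve_left (Nat.factorial_ne_zero n)
      exact h2
    subst hp0
    exact hp.hasFPowerSeriesAt.eventually_eq_zero
  have := han.eqOn_zero_of_preconnected_of_eventuallyEq_zero hconv.isPreconnected (h0 y hy) hz
  have h2 := this (x := y 0) (by simpa using hy)
  simpa using h2

lemma unique_on {U : Set (Fin 4 → ℝ)} (hU : IsOpen U) (hc : Convex ℝ U)
    (h0 : ∀ y ∈ U, Function.update y 0 0 ∈ U) {f g : (Fin 4 → ℝ) → ℂ}
    (hf : AnalyticOnNhd ℝ f U) (hg : AnalyticOnNhd ℝ g U)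
    (hf' : ∀ y ∈ U, SFREq f y) (hg' : ∀ y ∈ U, SFREq g y)
    (hfg : ∀ y ∈ U, y 0 = 0 → f y = g y) : ∀ y ∈ U, f y = g y := by
  have hd : AnalyticOnNhd ℝ (fun y => f y - g y) U := hf.sub hg
  have key : ∀ k, Van U k (fun y => f y - g y) := by
    intro k
    induction k with
    | zero => exact hd
    | succ k ih =>
      refine ⟨hd, fun y hy h => by simp [hfg y hy h], ?_⟩
      have c (c : ℂ) : AnalyticOnNhd ℝ (fun _ : Fin 4 → ℝ => c) U := analyticOnNhd_const
      have e1 := (ih.pd hU (i := 1) (by decide)).mul hU (c (-1))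
      have e2 := (ih.pd hU (i := 2) (by decide)).mul hU ((c (-Complex.I)).mul hf)
      have e3 := (ih.pd hU (i := 3) (by decide)).mul hU ((c (-1)).mul hf)
      have e4 := ih.mul hU ((c (-Complex.I)).mul
        ((pd4_analytic hg 2).sub ((c Complex.I).mul (pd4_analytic hg 3))))
      refine Van.congr hU ?_ (((e1.add hU e2).add hU e3).add hU e4)
      intro y hy
      have a1 := (hf' y hy).1
      have a2 := (hg' y hy).1
      simp only [pd4_sub (hf y hy) (hg y hy), Pi.sub_apply]
      have hI : Complex.I * Complex.I = -1 := Complex.I_mul_I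
      linear_combination (-2) * a1 + 2 * a2 + (- f y * pd4 3 f y + f y * pd4 3 g y ) * hI
  intro y hy
  exact sub_eq_zero.1 (eq_zero_of_van hU hc h0 key y hy)

/-- The complexified foot point of the (complex) characteristic. -/
def footPt (p : (Fin 4 → ℝ) × ℂ) : Fin 3 → ℂ :=
  ![(p.1 1 : ℂ) - p.1 0, (p.1 2 : ℂ) - Complex.I * (p.2 * p.1 0), (p.1 3 : ℂ) - p.2 * p.1 0]

lemma coord_analytic (i : Fin 4) (p : (Fin 4 → ℝ) × ℂ) :
    AnalyticAt ℝ (fun p : (Fin 4 → ℝ) × ℂ => (p.1 i : ℂ)) p :=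
  ((Complex.ofRealCLM.comp (ContinuousLinearMap.proj (R := ℝ) (φ := fun _ : Fin 4 => ℝ) i)).comp
    (ContinuousLinearMap.fst ℝ (Fin 4 → ℝ) ℂ)).analyticAt p

lemma footPt_analytic (p : (Fin 4 → ℝ) × ℂ) : AnalyticAt ℝ footPt p := by
  have h2 : AnalyticAt ℝ (fun p : (Fin 4 → ℝ) × ℂ => p.2) p := analyticAt_snd
  unfold footPt
  rw [analyticAt_pi_iff]
  intro j
  fin_cases j
  · exact (coord_analytic 1 p).sub (coord_analytic 0 p)
  · exact (coord_analytic 2 p).sub (analyticAt_const.mul (h2.mul (coord_analytic 0 p)))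
  · exact (coord_analytic 3 p).sub (h2.mul (coord_analytic 0 p))

lemma footPt_zero {y : Fin 4 → ℝ} (h : y 0 = 0) (m : ℂ) :
    footPt (y, m) = fun i => ((Fin.tail y i : ℝ) : ℂ) := by
  ext j
  fin_cases j <;> simp [footPt, h, Fin.tail]

/-- Complex partial derivative. -/
def pdC (i : Fin 3) (M : (Fin 3 → ℂ) → ℂ) (z : Fin 3 → ℂ) : ℂ := fderiv ℂ M z (Pi.single i 1)

lemma pdC_analytic {M : (Fin 3 → ℂ) → ℂ} {z : Fin 3 → ℂ} (h : AnalyticAt ℂ M z) (i : Fin 3) :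
    AnalyticAt ℂ (pdC i M) z :=
  (ContinuousLinearMap.apply ℂ ℂ (Pi.single i 1 : Fin 3 → ℂ)).analyticAt _ |>.fun_comp h.fderiv

lemma fderiv_expand (M : (Fin 3 → ℂ) → ℂ) (z w : Fin 3 → ℂ) :
    fderiv ℂ M z w = w 0 * pdC 0 M z + w 1 * pdC 1 M z + w 2 * pdC 2 M z := by
  have hw : w = ∑ i, w i • (Pi.single i 1 : Fin 3 → ℂ) := by
    ext j; simp [Finset.sum_apply, Pi.single_apply]
  conv_lhs => rw [hw]
  simp [Fin.sum_univ_three, pdC]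

lemma pd3_eq_pdC {M : (Fin 3 → ℂ) → ℂ} {f : (Fin 3 → ℝ) → ℂ} {x : Fin 3 → ℝ}
    (hM : AnalyticAt ℂ M (fun i => (x i : ℂ)))
    (h : ∀ᶠ y in 𝓝 x, M (fun i => (y i : ℂ)) = f y) (i : Fin 3) :
    pd3 i f x = pdC i M (fun i => (x i : ℂ)) := by
  let L : (Fin 3 → ℝ) →L[ℝ] (Fin 3 → ℂ) :=
    ContinuousLinearMap.pi fun i => Complex.ofRealCLM.comp (ContinuousLinearMap.proj i)
  have hL : ∀ y, L y = fun i => (y i : ℂ) := fun y => rfl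
  have h1 : HasFDerivAt M ((fderiv ℂ M (L x)).restrictScalars ℝ) (L x) :=
    hM.differentiableAt.hasFDerivAt.restrictScalars ℝ
  have h2 := h1.comp x L.hasFDerivAt
  have h3 : f =ᶠ[𝓝 x] M ∘ L := by filter_upwards [h] with y hy using hy.symm
  rw [pd3, h3.fderiv_eq, h2.fderiv]
  simp only [ContinuousLinearMap.comp_apply, ContinuousLinearMap.coe_restrictScalars', pdC]
  congr 1
  rw [hL]
  ext j
  by_cases hj : j = i
  · subst hj; simp
  · simp [hj]

lemma footPt_deriv {M : (Fin 3 → ℂ) → ℂ} {μ : (Fin 4 → ℝ) → ℂ} {y : Fin 4 → ℝ}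
    (hM : AnalyticAt ℂ M (footPt (y, μ y))) (hμ : AnalyticAt ℝ μ y)
    (h : ∀ᶠ z in 𝓝 y, μ z = M (footPt (z, μ z))) (v : Fin 4 → ℝ) :
    fderiv ℝ μ y v = ((v 1 : ℂ) - v 0) * pdC 0 M (footPt (y, μ y))
      + ((v 2 : ℂ) - Complex.I * (fderiv ℝ μ y v * y 0 + μ y * v 0)) * pdC 1 M (footPt (y, μ y))
      + ((v 3 : ℂ) - (fderiv ℝ μ y v * y 0 + μ y * v 0)) * pdC 2 M (footPt (y, μ y)) := by
  have hl : HasDerivAt (fun s : ℝ => y + s • v) v 0 := by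
    simpa using ((hasDerivAt_id (0 : ℝ)).smul_const v).const_add y
  have hc : ∀ i, HasDerivAt (fun s : ℝ => (((y + s • v) i : ℝ) : ℂ)) (v i : ℂ) 0 := by
    intro i
    exact ((hasDerivAt_pi.1 hl) i).ofReal_comp
  have hm : HasDerivAt (fun s : ℝ => μ (y + s • v)) (fderiv ℝ μ y v) 0 := by
    have h1 : HasFDerivAt μ (fderiv ℝ μ y) (y + (0 : ℝ) • v) := by
      simpa using hμ.differentiableAt.hasFDerivAt
    exact h1.comp_hasDerivAt 0 hl
  have hξ : HasDerivAt (fun s : ℝ => footPt (y + s • v, μ (y + s • v)))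
      ![(v 1 : ℂ) - v 0, (v 2 : ℂ) - Complex.I * (fderiv ℝ μ y v * y 0 + μ y * v 0),
        (v 3 : ℂ) - (fderiv ℝ μ y v * y 0 + μ y * v 0)] 0 := by
    rw [hasDerivAt_pi]
    have hmul := hm.mul (hc 0)
    simp only [zero_smul, add_zero] at hmul
    intro j
    fin_cases j
    · exact (hc 1).sub (hc 0)
    · exact (hc 2).sub (hmul.const_mul Complex.I)
    · exact (hc 3).sub hmul
  have hM' : HasFDerivAt M ((fderiv ℂ M (footPt (y, μ y))).restrictScalars ℝ)
      (footPt (y + (0 : ℝ) • v, μ (y + (0 : ℝ) • v))) := by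
    simpa using hM.differentiableAt.hasFDerivAt.restrictScalars ℝ
  have hcomp := hM'.comp_hasDerivAt 0 hξ
  have heq : (fun s : ℝ => μ (y + s • v)) =ᶠ[𝓝 0]
      M ∘ (fun s : ℝ => footPt (y + s • v, μ (y + s • v))) := by
    have := hl.continuousAt.tendsto
    simp only [zero_smul, add_zero] at this
    filter_upwards [this.eventually h] with s hs using hs
  have hfin := hm.unique (hcomp.congr_of_eventuallyEq heq)
  rw [ContinuousLinearMap.coe_restrictScalars', fderiv_expand] at hfin
  simpa using hfin

lemma local_exists {A3 : Set (Fin 3 → ℝ)} (hA3 : IsOpen A3)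
    {μ₀ : (Fin 3 → ℝ) → ℂ} (hμ₀ : AnalyticOnNhd ℝ μ₀ A3)
    (heq : ∀ x ∈ A3,
      (pd3 1 μ₀ x + Complex.I * pd3 2 μ₀ x) / 2
        - Complex.I * μ₀ x * pd3 0 μ₀ x
        + (μ₀ x) ^ 2 * ((pd3 1 μ₀ x - Complex.I * pd3 2 μ₀ x) / 2) = 0)
    {x : Fin 3 → ℝ} (hx : x ∈ A3) :
    ∃ μ : (Fin 4 → ℝ) → ℂ, ∀ᶠ y in 𝓝 (slice0 x),
      AnalyticAt ℝ μ y ∧ (y 0 = 0 → Fin.tail y ∈ A3 ∧ μ y = μ₀ (Fin.tail y)) ∧ SFREq μ y := by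
  obtain ⟨M, hM, hMμ⟩ := complexify (hμ₀ x hx)
  set z0 : Fin 3 → ℂ := fun i => (x i : ℂ) with hz0
  -- the complexified equation
  have hP : ∀ᶠ z in 𝓝 z0, (pdC 1 M z + Complex.I * pdC 2 M z) / 2
        - Complex.I * M z * pdC 0 M z
        + (M z) ^ 2 * ((pdC 1 M z - Complex.I * pdC 2 M z) / 2) = 0 := by
    have a0 := pdC_analytic hM 0
    have a1 := pdC_analytic hM 1
    have a2 := pdC_analytic hM 2
    have hcts : Filter.Tendsto (fun y : Fin 3 → ℝ => (fun i => (y i : ℂ))) (𝓝 x) (𝓝 z0) := by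
      have : Continuous (fun y : Fin 3 → ℝ => (fun i => (y i : ℂ) : Fin 3 → ℂ)) := by fun_prop
      exact this.tendsto x
    apply real_identity
    · have c (c : ℂ) : AnalyticAt ℂ (fun _ : Fin 3 → ℂ => c) z0 := analyticAt_const
      exact (((a1.add ((c Complex.I).mul a2)).div (c 2) (by norm_num)).sub
        (((c Complex.I).mul hM).mul a0)).add
        ((hM.pow 2).mul ((a1.sub ((c Complex.I).mul a2)).div (c 2) (by norm_num)))
    · filter_upwards [hMμ.eventually_nhds, hcts.eventually hM.eventually_analyticAt,
        hA3.mem_nhds hx] with y hy1 hy2 hy3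
      have := heq y hy3
      rwa [pd3_eq_pdC hy2 hy1, pd3_eq_pdC hy2 hy1, pd3_eq_pdC hy2 hy1, ← hy1.self_of_nhds] at this
  -- implicit function theorem
  have hs0 : slice0 x 0 = 0 := rfl
  have hst : Fin.tail (slice0 x) = x := Fin.tail_cons _ _
  have hfoot : ∀ m, footPt (slice0 x, m) = z0 := by
    intro m; rw [footPt_zero hs0, hst]
  let F : (Fin 4 → ℝ) × ℂ → ℂ := fun p => p.2 - M (footPt p)
  let u : (Fin 4 → ℝ) × ℂ := (slice0 x, μ₀ x)
  have hMR : AnalyticAt ℝ M (footPt u) := by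
    rw [hfoot]; exact hM.restrictScalars
  have hF : AnalyticAt ℝ F u := analyticAt_snd.sub (hMR.fun_comp (footPt_analytic u))
  have hinv : fderiv ℝ F u ∘L .inr ℝ (Fin 4 → ℝ) ℂ = ContinuousLinearMap.id ℝ ℂ := by
    have h1 : HasFDerivAt (fun m : ℂ => F (slice0 x, m))
        (fderiv ℝ F u ∘L .inr ℝ (Fin 4 → ℝ) ℂ) (μ₀ x) :=
      HasFDerivAt.comp (μ₀ x) (g := F) (f := fun m : ℂ => (slice0 x, m))
        hF.differentiableAt.hasFDerivAt (hasFDerivAt_prodMk_right _ _)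
    have h2 : HasFDerivAt (fun m : ℂ => F (slice0 x, m)) (ContinuousLinearMap.id ℝ ℂ) (μ₀ x) := by
      simp only [F, hfoot]
      exact (hasFDerivAt_id _).sub_const _
    exact h1.unique h2
  have hinv' : (fderiv ℝ F u ∘L .inr ℝ (Fin 4 → ℝ) ℂ).IsInvertible := by
    rw [hinv]; exact ⟨ContinuousLinearEquiv.refl ℝ ℂ, rfl⟩
  have hFc : ContDiffAt ℝ ⊤ F u := hF.contDiffAt
  have hn : (⊤ : WithTop ℕ∞) ≠ 0 := by simp
  let μ := hFc.implicitFunction hn hinv'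
  have hμan : AnalyticAt ℝ μ (slice0 x) :=
    (hFc.contDiffAt_implicitFunction hn hinv').analyticAt
  have hμ0 : μ (slice0 x) = μ₀ x := hFc.implicitFunction_apply_self hn hinv'
  have hFu : F u = 0 := by
    simp only [F, u, hfoot]
    rw [← hMμ.self_of_nhds, sub_self]
  have himp : ∀ᶠ y in 𝓝 (slice0 x), μ y = M (footPt (y, μ y)) := by
    filter_upwards [hFc.eventually_apply_implicitFunction hn hinv'] with y hy
    rw [hFu] at hy
    exact sub_eq_zero.1 hy
  have hft : Filter.Tendsto (fun y => footPt (y, μ y)) (𝓝 (slice0 x)) (𝓝 z0) := by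
    have h1 : ContinuousAt (fun y => footPt (y, μ y)) (slice0 x) :=
      ContinuousAt.comp (g := footPt) (f := fun y => (y, μ y)) (footPt_analytic _).continuousAt
        (continuousAt_id.prodMk hμan.continuousAt)
    have := h1.tendsto
    rwa [hfoot] at this
  have htail : Filter.Tendsto (fun y : Fin 4 → ℝ => Fin.tail y) (𝓝 (slice0 x)) (𝓝 x) := by
    have : Continuous (fun y : Fin 4 → ℝ => (Fin.tail y : Fin 3 → ℝ)) := by
      unfold Fin.tail; fun_prop
    have := this.tendsto (slice0 x)
    rwa [hst] at this
  have hD : ∀ᶠ y in 𝓝 (slice0 x), (1 : ℂ) + y 0 * (Complex.I * pdC 1 M (footPt (y, μ y))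
      + pdC 2 M (footPt (y, μ y))) ≠ 0 := by
    have t1 := (pdC_analytic hM 1).continuousAt.tendsto.comp hft
    have t2 := (pdC_analytic hM 2).continuousAt.tendsto.comp hft
    have t0 : Filter.Tendsto (fun y : Fin 4 → ℝ => (y 0 : ℂ)) (𝓝 (slice0 x)) (𝓝 0) := by
      have : Continuous (fun y : Fin 4 → ℝ => (y 0 : ℂ)) := by fun_prop
      simpa [hs0] using this.tendsto (slice0 x)
    have t := (t0.mul ((t1.const_mul Complex.I).add t2)).const_add 1
    rw [zero_mul, add_zero] at t
    exact t.eventually_ne one_ne_zero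
  refine ⟨μ, ?_⟩
  filter_upwards [hμan.eventually_analyticAt, himp.eventually_nhds, hft.eventually hP,
    hft.eventually hM.eventually_analyticAt, hD, htail.eventually hMμ,
    htail.eventually (hA3.mem_nhds hx)] with y b1 b2 b3 b4 b5 b6 b7
  refine ⟨b1, fun h0 => ⟨b7, ?_⟩, ?_⟩
  · rw [b2.self_of_nhds, footPt_zero h0, b6]
  · have e0 := footPt_deriv b4 b1 b2 (Pi.single 0 1)
    have e1 := footPt_deriv b4 b1 b2 (Pi.single 1 1)
    have e2 := footPt_deriv b4 b1 b2 (Pi.single 2 1)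
    have e3 := footPt_deriv b4 b1 b2 (Pi.single 3 1)
    rw [← b2.self_of_nhds] at b3
    change pd4 0 μ y = _ + (_ - _ * (pd4 0 μ y * _ + _)) * _ + (_ - (pd4 0 μ y * _ + _)) * _ at e0
    change pd4 1 μ y = _ + (_ - _ * (pd4 1 μ y * _ + _)) * _ + (_ - (pd4 1 μ y * _ + _)) * _ at e1
    change pd4 2 μ y = _ + (_ - _ * (pd4 2 μ y * _ + _)) * _ + (_ - (pd4 2 μ y * _ + _)) * _ at e2
    change pd4 3 μ y = _ + (_ - _ * (pd4 3 μ y * _ + _)) * _ + (_ - (pd4 3 μ y * _ + _)) * _ at e3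
    simp at e0 e1 e2 e3
    unfold SFREq
    generalize pd4 0 μ y = m0 at *
    generalize pd4 1 μ y = m1 at *
    generalize pd4 2 μ y = m2 at *
    generalize pd4 3 μ y = m3 at *
    generalize pdC 0 M (footPt (y, μ y)) = M1 at *
    generalize pdC 1 M (footPt (y, μ y)) = M2 at *
    generalize pdC 2 M (footPt (y, μ y)) = M3 at *
    generalize (y 0 : ℂ) = t at *
    generalize μ y = m at *
    have hI : Complex.I * Complex.I = -1 := Complex.I_mul_I
    have d0 : m0 * (1 + t * (Complex.I * M2 + M3)) = -M1 - Complex.I * m * M2 - m * M3 := by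
      linear_combination e0
    have d1 : m1 * (1 + t * (Complex.I * M2 + M3)) = M1 := by
      linear_combination e1
    have d2 : m2 * (1 + t * (Complex.I * M2 + M3)) = M2 := by
      linear_combination e2
    have d3 : m3 * (1 + t * (Complex.I * M2 + M3)) = M3 := by
      linear_combination e3
    constructor
    · apply mul_right_cancel₀ b5
      linear_combination (1/2) * d0 + (1/2) * d1 + Complex.I * m / 2 * d2
        - Complex.I * Complex.I * m / 2 * d3 - m * M3 / 2 * hI
    · apply mul_right_cancel₀ b5
      linear_combination (1/2) * d2 + (1/2) * Complex.I * d3 - Complex.I * m / 2 * d1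
        + Complex.I * m / 2 * d0 + b3 - m ^ 2 * M2 / 2 * hI

lemma ball_slice {x : Fin 3 → ℝ} {r : ℝ} {y : Fin 4 → ℝ} (hy : y ∈ Metric.ball (slice0 x) r) :
    Function.update y 0 0 ∈ Metric.ball (slice0 x) r := by
  have hr : 0 < r := Metric.pos_of_mem_ball hy
  rw [Metric.mem_ball, dist_pi_lt_iff hr] at hy ⊢
  intro j
  by_cases hj : j = 0
  · subst hj; simpa [slice0] using hr
  · simpa [hj] using hy j

lemma slice0_tail {y : Fin 4 → ℝ} (h : y 0 = 0) : slice0 (Fin.tail y) = y := by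
  rw [slice0, ← h]; exact Fin.cons_self_tail y

lemma SFREq.congr {f g : (Fin 4 → ℝ) → ℂ} {y : Fin 4 → ℝ} (h : f =ᶠ[𝓝 y] g)
    (hf : SFREq f y) : SFREq g y := by
  unfold SFREq pd4 at hf ⊢
  rwa [h.fderiv_eq, h.self_of_nhds] at hf

/-- Theorem 3.3 in coordinates: a real-analytic solution `μ₀` on `A³ ⊆ ℝ³` of the conformal
foliation equation extends, uniquely near the slice `{0} × A³`, to a real-analytic solution
of the shear-free ray congruence equations on a neighbourhood in Minkowski `ℝ⁴`. -/
theorem sfr_extension_and_uniqueness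
    (A3 : Set (Fin 3 → ℝ)) (hA3 : IsOpen A3)
    (μ₀ : (Fin 3 → ℝ) → ℂ) (hμ₀ : AnalyticOnNhd ℝ μ₀ A3)
    (heq : ∀ x ∈ A3,
      (pd3 1 μ₀ x + Complex.I * pd3 2 μ₀ x) / 2
        - Complex.I * μ₀ x * pd3 0 μ₀ x
        + (μ₀ x) ^ 2 * ((pd3 1 μ₀ x - Complex.I * pd3 2 μ₀ x) / 2) = 0) :
    (∃ AM : Set (Fin 4 → ℝ), IsOpen AM ∧
      AM ∩ {y | y 0 = 0} = slice0 '' A3 ∧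
      ∃ μ : (Fin 4 → ℝ) → ℂ, AnalyticOnNhd ℝ μ AM ∧
        (∀ x ∈ A3, μ (slice0 x) = μ₀ x) ∧
        (∀ y ∈ AM, SFREq μ y)) ∧
    (∀ (V₁ V₂ : Set (Fin 4 → ℝ)) (μ₁ μ₂ : (Fin 4 → ℝ) → ℂ),
      IsOpen V₁ → IsOpen V₂ → slice0 '' A3 ⊆ V₁ → slice0 '' A3 ⊆ V₂ →
      AnalyticOnNhd ℝ μ₁ V₁ → AnalyticOnNhd ℝ μ₂ V₂ →
      (∀ y ∈ V₁, SFREq μ₁ y) → (∀ y ∈ V₂, SFREq μ₂ y) →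
      (∀ x ∈ A3, μ₁ (slice0 x) = μ₀ x) → (∀ x ∈ A3, μ₂ (slice0 x) = μ₀ x) →
      ∃ W : Set (Fin 4 → ℝ), IsOpen W ∧ slice0 '' A3 ⊆ W ∧ W ⊆ V₁ ∩ V₂ ∧
        ∀ y ∈ W, μ₁ y = μ₂ y) := by
  constructor
  · have hloc : ∀ x : A3, ∃ (μ : (Fin 4 → ℝ) → ℂ) (r : ℝ), 0 < r ∧
        ∀ y ∈ Metric.ball (slice0 x) r, AnalyticAt ℝ μ y ∧
          (y 0 = 0 → Fin.tail y ∈ A3 ∧ μ y = μ₀ (Fin.tail y)) ∧ SFREq μ y := by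
      intro x
      obtain ⟨μ, hμ⟩ := local_exists hA3 hμ₀ heq x.2
      obtain ⟨r, hr, h⟩ := Metric.eventually_nhds_iff_ball.1 hμ
      exact ⟨μ, r, hr, h⟩
    choose m r hr hm using hloc
    have hagree : ∀ (a b : A3) (y : Fin 4 → ℝ), y ∈ Metric.ball (slice0 a) (r a) →
        y ∈ Metric.ball (slice0 b) (r b) → m a y = m b y := by
      intro a b y ha hb
      refine unique_on (U := Metric.ball (slice0 a) (r a) ∩ Metric.ball (slice0 b) (r b))
        (Metric.isOpen_ball.inter Metric.isOpen_ball)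
        ((convex_ball _ _).inter (convex_ball _ _))
        (fun z hz => ⟨ball_slice hz.1, ball_slice hz.2⟩)
        (fun z hz => (hm a z hz.1).1) (fun z hz => (hm b z hz.2).1)
        (fun z hz => (hm a z hz.1).2.2) (fun z hz => (hm b z hz.2).2.2) ?_ y ⟨ha, hb⟩
      intro z hz h0
      rw [((hm a z hz.1).2.1 h0).2, ((hm b z hz.2).2.1 h0).2]
    classical
    let μ : (Fin 4 → ℝ) → ℂ := fun y =>
      if h : ∃ a : A3, y ∈ Metric.ball (slice0 a) (r a) then m h.choose y else 0
    have hμ : ∀ (a : A3) (y : Fin 4 → ℝ), y ∈ Metric.ball (slice0 a) (r a) → μ y = m a y := by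
      intro a y hy
      have h : ∃ a : A3, y ∈ Metric.ball (slice0 a) (r a) := ⟨a, hy⟩
      simp only [μ, dif_pos h]
      exact hagree _ _ y h.choose_spec hy
    have hev : ∀ (a : A3) (y : Fin 4 → ℝ), y ∈ Metric.ball (slice0 a) (r a) →
        m a =ᶠ[𝓝 y] μ := by
      intro a y hy
      filter_upwards [Metric.isOpen_ball.mem_nhds hy] with z hz using (hμ a z hz).symm
    refine ⟨⋃ a : A3, Metric.ball (slice0 a) (r a), isOpen_iUnion fun _ => Metric.isOpen_ball,
      ?_, μ, ?_, ?_, ?_⟩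
    · ext y
      constructor
      · rintro ⟨hy, h0⟩
        obtain ⟨a, ha⟩ := Set.mem_iUnion.1 hy
        exact ⟨Fin.tail y, ((hm a y ha).2.1 h0).1, slice0_tail h0⟩
      · rintro ⟨x, hx, rfl⟩
        exact ⟨Set.mem_iUnion.2 ⟨⟨x, hx⟩, Metric.mem_ball_self (hr _)⟩, rfl⟩
    · intro y hy
      obtain ⟨a, ha⟩ := Set.mem_iUnion.1 hy
      exact (hm a y ha).1.congr (hev a y ha)
    · intro x hx
      have hb : slice0 x ∈ Metric.ball (slice0 (⟨x, hx⟩ : A3)) (r ⟨x, hx⟩) :=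
        Metric.mem_ball_self (hr _)
      rw [hμ _ _ hb, ((hm _ _ hb).2.1 rfl).2]
      rfl
    · intro y hy
      obtain ⟨a, ha⟩ := Set.mem_iUnion.1 hy
      exact (hm a y ha).2.2.congr (hev a y ha)
  · intro V₁ V₂ μ₁ μ₂ hV₁ hV₂ hs₁ hs₂ ha₁ ha₂ he₁ he₂ hi₁ hi₂
    have hloc : ∀ x : A3, ∃ r : ℝ, 0 < r ∧
        ∀ y ∈ Metric.ball (slice0 x) r, y ∈ V₁ ∩ V₂ ∧ Fin.tail y ∈ A3 := by
      intro x
      have htail : Filter.Tendsto (fun y : Fin 4 → ℝ => Fin.tail y) (𝓝 (slice0 x))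
          (𝓝 (x : Fin 3 → ℝ)) := by
        have : Continuous (fun y : Fin 4 → ℝ => (Fin.tail y : Fin 3 → ℝ)) := by
          unfold Fin.tail; fun_prop
        exact this.tendsto (slice0 x)
      have hV : ∀ᶠ y in 𝓝 (slice0 x), y ∈ V₁ ∩ V₂ :=
        (hV₁.inter hV₂).mem_nhds ⟨hs₁ ⟨x, x.2, rfl⟩, hs₂ ⟨x, x.2, rfl⟩⟩
      exact Metric.eventually_nhds_iff_ball.1
        (hV.and (htail.eventually (hA3.mem_nhds x.2)))
    choose r hr h using hloc
    refine ⟨⋃ a : A3, Metric.ball (slice0 a) (r a), isOpen_iUnion fun _ => Metric.isOpen_ball,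
      ?_, ?_, ?_⟩
    · rintro _ ⟨x, hx, rfl⟩
      exact Set.mem_iUnion.2 ⟨⟨x, hx⟩, Metric.mem_ball_self (hr _)⟩
    · intro y hy
      obtain ⟨a, ha⟩ := Set.mem_iUnion.1 hy
      exact (h a y ha).1
    · intro y hy
      obtain ⟨a, ha⟩ := Set.mem_iUnion.1 hy
      refine unique_on Metric.isOpen_ball (convex_ball _ _) (fun z hz => ball_slice hz)
        (fun z hz => ha₁ z (h a z hz).1.1) (fun z hz => ha₂ z (h a z hz).1.2)
        (fun z hz => he₁ z (h a z hz).1.1) (fun z hz => he₂ z (h a z hz).1.2) ?_ y ha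
      intro z hz h0
      have h1 := hi₁ _ (h a z hz).2
      have h2 := hi₂ _ (h a z hz).2
      rw [slice0_tail h0] at h1 h2
      rw [h1, h2]

end
end

section
/- Let U be an open subset of ℂ⁴ and let g denote the standard symmetric complex-bilinear form g(u,v) = u₀v₀ + u₁v₁ + u₂v₂ + u₃v₃ on ℂ⁴. Let w₁, w₂ : U → ℂ⁴ be holomorphic maps such that for every x ∈ U the vectors w₁(x), w₂(x) are linearly independent over ℂ and g(wᵢ(x), wⱼ(x)) = 0 for all i, j ∈ {1,2}, so that Π_x = span_ℂ{w₁(x), w₂(x)} is a totally null 2-plane. For holomorphic F : U → ℂ⁴ and u ∈ ℂ⁴ write D_uF(x) = (DF)_x(u) (the complex Fréchet derivative applied to u). Then the following are equivalent: (i) for every x ∈ U and all i, j ∈ {1,2}, D_{wᵢ(x)}wⱼ(x) ∈ Π_x (the distribution Π is autoparallel); (ii) for every x ∈ U, [w₁,w₂](x) := D_{w₁(x)}w₂(x) − D_{w₂(x)}w₁(x) ∈ Π_x (the distribution Π is integrable). -/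
noncomputable section

/-- The standard symmetric complex-bilinear form on `ℂ⁴`. -/
def gC (u v : Fin 4 → ℂ) : ℂ := ∑ i, u i * v i

lemma gC_symm (u v : Fin 4 → ℂ) : gC u v = gC v u := by
  simp [gC, mul_comm]

/-- The form `gC` bundled as a bilinear form. -/
def gBil : LinearMap.BilinForm ℂ (Fin 4 → ℂ) := dotProductBilin ℂ ℂ

lemma gBil_apply (u v : Fin 4 → ℂ) : gBil u v = gC u v := rfl

lemma gBil_nondeg : gBil.Nondegenerate := by
  constructor
  · intro v h
    exact dotProduct_eq_zero v h
  · intro v h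
    refine dotProduct_eq_zero v fun w => ?_
    rw [dotProduct_comm]
    exact h w

lemma mem_span_iff_gC (a b v : Fin 4 → ℂ) (hi : LinearIndependent ℂ ![a, b])
    (haa : gC a a = 0) (hab : gC a b = 0) (hbb : gC b b = 0) :
    v ∈ Submodule.span ℂ {a, b} ↔ gC a v = 0 ∧ gC b v = 0 := by
  have key : ∀ u, u ∈ gBil.orthogonal (Submodule.span ℂ {a, b}) ↔ gC a u = 0 ∧ gC b u = 0 := by
    intro u
    rw [LinearMap.BilinForm.mem_orthogonal_iff]
    constructor
    · intro h
      exact ⟨h a (Submodule.subset_span (by simp)), h b (Submodule.subset_span (by simp))⟩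
    · rintro ⟨h1, h2⟩ n hn
      obtain ⟨s, t, rfl⟩ := Submodule.mem_span_pair.1 hn
      change gBil _ u = 0
      rw [map_add, map_smul, map_smul, LinearMap.add_apply, LinearMap.smul_apply,
        LinearMap.smul_apply, gBil_apply, gBil_apply, h1, h2]
      simp
  have hle : Submodule.span ℂ {a, b} ≤ gBil.orthogonal (Submodule.span ℂ {a, b}) := by
    rw [Submodule.span_le]
    rintro u (rfl | rfl)
    · exact (key _).2 ⟨haa, by rw [gC_symm, hab]⟩
    · exact (key _).2 ⟨hab, hbb⟩
  have hd : Module.finrank ℂ (Submodule.span ℂ {a, b}) = 2 := by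
    have := finrank_span_eq_card hi
    rwa [Matrix.range_cons_cons_empty, Fintype.card_fin] at this
  have heq := Submodule.eq_of_le_of_finrank_eq hle (by
    rw [LinearMap.BilinForm.finrank_orthogonal gBil_nondeg, hd]; simp)
  rw [← key, ← heq]

lemma gC_deriv {U : Set (Fin 4 → ℂ)} (hU : IsOpen U) {f h : (Fin 4 → ℂ) → (Fin 4 → ℂ)}
    (hf : DifferentiableOn ℂ f U) (hh : DifferentiableOn ℂ h U)
    (h0 : ∀ x ∈ U, gC (f x) (h x) = 0) {x : Fin 4 → ℂ} (hx : x ∈ U) (u : Fin 4 → ℂ) :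
    gC (f x) (fderiv ℂ h x u) + gC (h x) (fderiv ℂ f x u) = 0 := by
  have hn := hU.mem_nhds hx
  have hfd := hasFDerivAt_pi'.1 (hf.differentiableAt hn).hasFDerivAt
  have hhd := hasFDerivAt_pi'.1 (hh.differentiableAt hn).hasFDerivAt
  have D := HasFDerivAt.fun_sum (u := Finset.univ) fun i _ => (hfd i).mul (hhd i)
  have E : HasFDerivAt (fun y => ∑ i, f y i * h y i) (0 : (Fin 4 → ℂ) →L[ℂ] ℂ) x := by
    refine (hasFDerivAt_const (0 : ℂ) x).congr_of_eventuallyEq ?_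
    filter_upwards [hn] with y hy using h0 y hy
  have := congrArg (fun L => L u) (D.unique E)
  simpa [gC, Finset.sum_add_distrib] using this

/-- Lemma 4.2: a complex-analytic distribution `Π = span{w₁, w₂}` of totally null 2-planes
on an open subset of `ℂ⁴` is autoparallel if and only if it is integrable. -/
theorem alpha_plane_autoparallel_iff_integrable
    (U : Set (Fin 4 → ℂ)) (hU : IsOpen U)
    (W : Fin 2 → (Fin 4 → ℂ) → (Fin 4 → ℂ))
    (hhol : ∀ i, DifferentiableOn ℂ (W i) U)
    (hindep : ∀ x ∈ U, LinearIndependent ℂ ![W 0 x, W 1 x])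
    (hnull : ∀ x ∈ U, ∀ i j : Fin 2, gC (W i x) (W j x) = 0) :
    (∀ x ∈ U, ∀ i j : Fin 2,
        fderiv ℂ (W j) x (W i x) ∈ Submodule.span ℂ {W 0 x, W 1 x}) ↔
    (∀ x ∈ U,
        fderiv ℂ (W 1) x (W 0 x) - fderiv ℂ (W 0) x (W 1 x) ∈
          Submodule.span ℂ {W 0 x, W 1 x}) := by
  have hs : ∀ x ∈ U, ∀ v, v ∈ Submodule.span ℂ {W 0 x, W 1 x} ↔
      gC (W 0 x) v = 0 ∧ gC (W 1 x) v = 0 := fun x hx v =>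
    mem_span_iff_gC _ _ v (hindep x hx) (hnull x hx 0 0) (hnull x hx 0 1) (hnull x hx 1 1)
  constructor
  · intro h x hx
    exact Submodule.sub_mem _ (h x hx 0 1) (h x hx 1 0)
  · intro h x hx
    have hd : ∀ i j u, gC (W i x) (fderiv ℂ (W j) x u) + gC (W j x) (fderiv ℂ (W i) x u) = 0 :=
      fun i j u => gC_deriv hU (hhol i) (hhol j) (fun y hy => hnull y hy i j) hx u
    have hself : ∀ i u, gC (W i x) (fderiv ℂ (W i) x u) = 0 := fun i u =>
      add_self_eq_zero.1 (hd i i u)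
    obtain ⟨h1, h2⟩ := (hs x hx _).1 (h x hx)
    rw [← gBil_apply, map_sub, gBil_apply, gBil_apply, hself, sub_zero] at h1
    rw [← gBil_apply, map_sub, gBil_apply, gBil_apply, hself, zero_sub, neg_eq_zero] at h2
    have h3 := hd 0 1 (W 0 x)
    rw [h1, zero_add] at h3
    have h4 := hd 0 1 (W 1 x)
    rw [h2, add_zero] at h4
    intro i j
    rw [hs x hx]
    fin_cases i <;> fin_cases j
    · exact ⟨hself 0 _, h3⟩
    · exact ⟨h1, hself 1 _⟩
    · exact ⟨hself 0 _, h2⟩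
    · exact ⟨h4, hself 1 _⟩

end
end

section
/- Let A be an open subset of ℝ⁴ (coordinates (x₀,x₁,x₂,x₃)) and let μ : A → ℂ be a C² map satisfying on A the equations ∂_{q̄₁}μ − μ·∂_{q₂}μ = 0 and ∂_{q̄₂}μ + μ·∂_{q₁}μ = 0, where ∂_{q₁} = ½(∂₀ − i∂₁), ∂_{q̄₁} = ½(∂₀ + i∂₁), ∂_{q₂} = ½(∂₂ − i∂₃), ∂_{q̄₂} = ½(∂₂ + i∂₃). Then on A: ∑ᵢ₌₀³ ∂²μ/∂xᵢ² = 0 and ∑ᵢ₌₀³ (∂μ/∂xᵢ)² = 0; that is, μ is a harmonic morphism to ℂ. -/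
noncomputable section

/-- Partial derivative in the `i`-th coordinate direction of a map `ℝ⁴ → ℂ`. -/
def pd (i : Fin 4) (f : (Fin 4 → ℝ) → ℂ) (x : Fin 4 → ℝ) : ℂ :=
  fderiv ℝ f x (Pi.single i 1)

/-- Proposition 6.2: a `C²` map `μ` on an open subset of `ℝ⁴` satisfying the Hermitian
structure equations `∂_{q̄₁}μ − μ ∂_{q₂}μ = 0` and `∂_{q̄₂}μ + μ ∂_{q₁}μ = 0`
(with `∂_{q₁} = ½(∂₀ − i∂₁)` etc.) is a harmonic morphism:
`∑ᵢ ∂²μ/∂xᵢ² = 0` and `∑ᵢ (∂μ/∂xᵢ)² = 0`. -/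
theorem hermitian_representative_is_harmonic_morphism
    (A : Set (Fin 4 → ℝ)) (hA : IsOpen A)
    (μ : (Fin 4 → ℝ) → ℂ) (hμ : ContDiffOn ℝ 2 μ A)
    (heq1 : ∀ x ∈ A,
      (pd 0 μ x + Complex.I * pd 1 μ x) / 2
        - μ x * ((pd 2 μ x - Complex.I * pd 3 μ x) / 2) = 0)
    (heq2 : ∀ x ∈ A,
      (pd 2 μ x + Complex.I * pd 3 μ x) / 2
        + μ x * ((pd 0 μ x - Complex.I * pd 1 μ x) / 2) = 0) :
    ∀ x ∈ A,
      (∑ i : Fin 4, pd i (pd i μ) x = 0) ∧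
      (∑ i : Fin 4, (pd i μ x) ^ 2 = 0) := by
  intro x hx
  have hc : ContDiffAt ℝ 2 μ x := hμ.contDiffAt (hA.mem_nhds hx)
  have hd : HasFDerivAt μ (fderiv ℝ μ x) x :=
    (hc.differentiableAt (by norm_num)).hasFDerivAt
  have hd2 : HasFDerivAt (fderiv ℝ μ) (fderiv ℝ (fderiv ℝ μ) x) x :=
    ((hc.fderiv_right (m := 1) (by norm_num)).differentiableAt (by norm_num)).hasFDerivAt
  have hp : ∀ i, HasFDerivAt (pd i μ)
      ((fderiv ℝ (fderiv ℝ μ) x).flip (Pi.single i 1)) x := by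
    intro i
    exact ((ContinuousLinearMap.apply ℝ ℂ (Pi.single i (1 : ℝ))).hasFDerivAt.comp x hd2)
  have hpd : ∀ i j, pd j (pd i μ) x
      = (fderiv ℝ (fderiv ℝ μ) x (Pi.single j 1)) (Pi.single i 1) := by
    intro i j
    unfold pd at hp ⊢
    rw [(hp i).fderiv]
    rfl
  have hsymm : ∀ i j, pd j (pd i μ) x = pd i (pd j μ) x := by
    intro i j
    rw [hpd, hpd]
    exact (hc.isSymmSndFDerivAt (by simp)) _ _
  have hmem : ∀ᶠ y in nhds x, y ∈ A := hA.mem_nhds hx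
  have key1 : ∀ j, (pd j (pd 0 μ) x + Complex.I * pd j (pd 1 μ) x)
      - (μ x * (pd j (pd 2 μ) x - Complex.I * pd j (pd 3 μ) x)
        + (pd 2 μ x - Complex.I * pd 3 μ x) * pd j μ x) = 0 := by
    intro j
    have h := (((hp 0).add ((hp 1).const_mul Complex.I)).sub
      (hd.mul ((hp 2).sub ((hp 3).const_mul Complex.I))))
    have h0 := h.congr_of_eventuallyEq (f₁ := fun _ => (0 : ℂ)) (by
      filter_upwards [hmem] with y hy
      have := heq1 y hy
      simp only [Pi.add_apply, Pi.sub_apply, Pi.mul_apply]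
      linear_combination (-2) * this)
    have h1 := congrArg (fun L => L (Pi.single j (1 : ℝ)))
      (h0.unique (hasFDerivAt_const (0 : ℂ) x))
    simp only [hpd]
    simpa [pd] using h1
  have key2 : ∀ j, (pd j (pd 2 μ) x + Complex.I * pd j (pd 3 μ) x)
      + (μ x * (pd j (pd 0 μ) x - Complex.I * pd j (pd 1 μ) x)
        + (pd 0 μ x - Complex.I * pd 1 μ x) * pd j μ x) = 0 := by
    intro j
    have h := (((hp 2).add ((hp 3).const_mul Complex.I)).add
      (hd.mul ((hp 0).sub ((hp 1).const_mul Complex.I))))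
    have h0 := h.congr_of_eventuallyEq (f₁ := fun _ => (0 : ℂ)) (by
      filter_upwards [hmem] with y hy
      have := heq2 y hy
      simp only [Pi.add_apply, Pi.sub_apply, Pi.mul_apply]
      linear_combination (-2) * this)
    have h1 := congrArg (fun L => L (Pi.single j (1 : ℝ)))
      (h0.unique (hasFDerivAt_const (0 : ℂ) x))
    simp only [hpd]
    simpa [pd] using h1
  have hI : Complex.I ^ 2 = -1 := Complex.I_sq
  have e1 := heq1 x hx
  have e2 := heq2 x hx
  constructor
  · simp only [Fin.sum_univ_four]
    have a0 := key1 0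
    have a1 := key1 1
    have b2 := key2 2
    have b3 := key2 3
    rw [hsymm 1 0, hsymm 2 0, hsymm 3 0] at a0
    rw [hsymm 2 1, hsymm 3 1] at a1
    rw [hsymm 3 2] at b2
    linear_combination a0 - Complex.I * a1 + b2 - Complex.I * b3
      + (pd 1 (pd 1 μ) x + pd 3 (pd 3 μ) x) * hI
  · simp only [Fin.sum_univ_four]
    linear_combination 2 * (pd 0 μ x - Complex.I * pd 1 μ x) * e1
      + 2 * (pd 2 μ x - Complex.I * pd 3 μ x) * e2
      + ((pd 1 μ x) ^ 2 + (pd 3 μ x) ^ 2) * hI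

end
end

section
/- Let U be an open subset of ℝ⁴ (coordinates (t,x₁,x₂,x₃)) and let φ : U → ℂ be smooth, satisfying on U: −(∂_tφ)² + (∂₁φ)² + (∂₂φ)² + (∂₃φ)² = 0 and −∂_t²φ + ∂₁²φ + ∂₂²φ + ∂₃²φ = 0. Set ∂_v = ½(∂_t + ∂₁), ∂_w = ½(∂₁ − ∂_t), ∂_z = ½(∂₂ − i∂₃), ∂_{z̄} = ½(∂₂ + i∂₃). Let p ∈ U satisfy ∂_vφ(p) = ∂_wφ(p) = ∂_{z̄}φ(p) = 0 and ∂_zφ(p) ≠ 0. Then: (i) all first-order derivatives of ∂_{z̄}φ vanish at p, i.e. ∂_v∂_{z̄}φ(p) = ∂_w∂_{z̄}φ(p) = ∂_z∂_{z̄}φ(p) = ∂_{z̄}∂_{z̄}φ(p) = 0; and (ii) (∂_v∂_vφ(p))·(∂_w∂_wφ(p)) = 0. -/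
noncomputable section

/-- The null-coordinate derivative `∂_v = ½(∂_t + ∂₁)`. -/
def Dv (f : (Fin 4 → ℝ) → ℂ) : (Fin 4 → ℝ) → ℂ := fun x => (pd 0 f x + pd 1 f x) / 2

/-- The null-coordinate derivative `∂_w = ½(∂₁ − ∂_t)`. -/
def Dw (f : (Fin 4 → ℝ) → ℂ) : (Fin 4 → ℝ) → ℂ := fun x => (pd 1 f x - pd 0 f x) / 2

/-- The derivative `∂_z = ½(∂₂ − i∂₃)`. -/
def Dz (f : (Fin 4 → ℝ) → ℂ) : (Fin 4 → ℝ) → ℂ :=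
  fun x => (pd 2 f x - Complex.I * pd 3 f x) / 2

/-- The derivative `∂_{z̄} = ½(∂₂ + i∂₃)`. -/
def Dzb (f : (Fin 4 → ℝ) → ℂ) : (Fin 4 → ℝ) → ℂ :=
  fun x => (pd 2 f x + Complex.I * pd 3 f x) / 2

/-- Constant coefficient first order operator. -/
def DD (a : Fin 4 → ℂ) (f : (Fin 4 → ℝ) → ℂ) : (Fin 4 → ℝ) → ℂ :=
  fun x => ∑ i, a i * pd i f x

lemma pd_smooth {U : Set (Fin 4 → ℝ)} (hU : IsOpen U) {f : (Fin 4 → ℝ) → ℂ}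
    (hf : ContDiffOn ℝ (⊤ : ℕ∞) f U) (i : Fin 4) : ContDiffOn ℝ (⊤ : ℕ∞) (pd i f) U := by
  have h := hf.fderiv_of_isOpen hU (m := (⊤ : ℕ∞)) (by simp)
  exact h.clm_apply contDiffOn_const

lemma DD_smooth {U : Set (Fin 4 → ℝ)} (hU : IsOpen U) {f : (Fin 4 → ℝ) → ℂ}
    (hf : ContDiffOn ℝ (⊤ : ℕ∞) f U) (a : Fin 4 → ℂ) : ContDiffOn ℝ (⊤ : ℕ∞) (DD a f) U := by
  unfold DD
  exact ContDiffOn.sum fun i _ => contDiffOn_const.mul (pd_smooth hU hf i)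

lemma diffAt {U : Set (Fin 4 → ℝ)} (hU : IsOpen U) {f : (Fin 4 → ℝ) → ℂ}
    (hf : ContDiffOn ℝ (⊤ : ℕ∞) f U) {x : Fin 4 → ℝ} (hx : x ∈ U) : DifferentiableAt ℝ f x :=
  (hf.contDiffAt (hU.mem_nhds hx)).differentiableAt (by simp)

lemma pd_comm {U : Set (Fin 4 → ℝ)} (hU : IsOpen U) {f : (Fin 4 → ℝ) → ℂ}
    (hf : ContDiffOn ℝ (⊤ : ℕ∞) f U) {x : Fin 4 → ℝ} (hx : x ∈ U) (i j : Fin 4) :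
    pd i (pd j f) x = pd j (pd i f) x := by
  have hc := hf.contDiffAt (hU.mem_nhds hx)
  have hs : IsSymmSndFDerivAt ℝ f x := hc.isSymmSndFDerivAt (by
    simp only [minSmoothness_of_isRCLikeNormedField]
    exact WithTop.coe_le_coe.2 (le_top : (2 : ℕ∞) ≤ ⊤))
  have hd : DifferentiableAt ℝ (fderiv ℝ f) x :=
    (((hf.fderiv_of_isOpen hU (m := (⊤ : ℕ∞)) (by simp)).contDiffAt
      (hU.mem_nhds hx)).differentiableAt (by simp))
  have key : ∀ i j, pd i (pd j f) x = fderiv ℝ (fderiv ℝ f) x (Pi.single i 1) (Pi.single j 1) := by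
    intro i j
    have : pd j f = fun y => fderiv ℝ f y (Pi.single j 1) := rfl
    rw [this]
    unfold pd
    rw [fderiv_clm_apply hd (differentiableAt_const _)]
    simp
  rw [key, key]
  exact hs _ _

lemma pd_DD {U : Set (Fin 4 → ℝ)} (hU : IsOpen U) {f : (Fin 4 → ℝ) → ℂ}
    (hf : ContDiffOn ℝ (⊤ : ℕ∞) f U) {x : Fin 4 → ℝ} (hx : x ∈ U) (i : Fin 4) (b : Fin 4 → ℂ) :
    pd i (DD b f) x = ∑ j, b j * pd i (pd j f) x := by
  have hd : ∀ j, DifferentiableAt ℝ (pd j f) x := fun j => diffAt hU (pd_smooth hU hf j) hx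
  change fderiv ℝ (fun y => ∑ j, b j * pd j f y) x (Pi.single i 1) = _
  rw [fderiv_fun_sum (fun j _ => (hd j).const_mul (b j))]
  simp only [sum_apply]
  refine Finset.sum_congr rfl fun j _ => ?_
  rw [fderiv_const_mul (hd j)]
  rfl

lemma DD_comm {U : Set (Fin 4 → ℝ)} (hU : IsOpen U) {f : (Fin 4 → ℝ) → ℂ}
    (hf : ContDiffOn ℝ (⊤ : ℕ∞) f U) {x : Fin 4 → ℝ} (hx : x ∈ U) (a b : Fin 4 → ℂ) :
    DD a (DD b f) x = DD b (DD a f) x := by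
  conv_lhs => unfold DD
  conv_rhs => unfold DD
  change ∑ i, a i * pd i (DD b f) x = ∑ i, b i * pd i (DD a f) x
  simp only [pd_DD hU hf hx, Finset.mul_sum]
  rw [Finset.sum_comm]
  refine Finset.sum_congr rfl fun i _ => Finset.sum_congr rfl fun j _ => ?_
  rw [pd_comm hU hf hx i j]
  ring

lemma DD_congr {U : Set (Fin 4 → ℝ)} (hU : IsOpen U) {f g : (Fin 4 → ℝ) → ℂ}
    (h : ∀ x ∈ U, f x = g x) (a : Fin 4 → ℂ) : ∀ x ∈ U, DD a f x = DD a g x := by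
  intro x hx
  have : f =ᶠ[nhds x] g := Filter.eventuallyEq_of_mem (hU.mem_nhds hx) h
  simp only [DD, pd, this.fderiv_eq]

lemma DD_add {U : Set (Fin 4 → ℝ)} (hU : IsOpen U) {f g : (Fin 4 → ℝ) → ℂ}
    (hf : ContDiffOn ℝ (⊤ : ℕ∞) f U) (hg : ContDiffOn ℝ (⊤ : ℕ∞) g U)
    {x : Fin 4 → ℝ} (hx : x ∈ U) (a : Fin 4 → ℂ) :
    DD a (fun y => f y + g y) x = DD a f x + DD a g x := by
  simp only [DD, pd, fderiv_fun_add (diffAt hU hf hx) (diffAt hU hg hx),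
    add_apply, mul_add, Finset.sum_add_distrib]

lemma DD_mul {U : Set (Fin 4 → ℝ)} (hU : IsOpen U) {f g : (Fin 4 → ℝ) → ℂ}
    (hf : ContDiffOn ℝ (⊤ : ℕ∞) f U) (hg : ContDiffOn ℝ (⊤ : ℕ∞) g U)
    {x : Fin 4 → ℝ} (hx : x ∈ U) (a : Fin 4 → ℂ) :
    DD a (fun y => f y * g y) x = DD a f x * g x + f x * DD a g x := by
  simp only [DD, pd, fderiv_fun_mul (diffAt hU hf hx) (diffAt hU hg hx),
    add_apply, smul_apply, smul_eq_mul,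
    Finset.sum_mul, Finset.mul_sum, ← Finset.sum_add_distrib]
  refine Finset.sum_congr rfl fun i _ => ?_
  ring

lemma DD_zero (a : Fin 4 → ℂ) (x : Fin 4 → ℝ) : DD a (fun _ => 0) x = 0 := by
  simp [DD, pd]

/-- First derivative of `fg + hk = 0`. -/
lemma DD_quad {U : Set (Fin 4 → ℝ)} (hU : IsOpen U) {f g h k : (Fin 4 → ℝ) → ℂ}
    (hf : ContDiffOn ℝ (⊤ : ℕ∞) f U) (hg : ContDiffOn ℝ (⊤ : ℕ∞) g U)
    (hh : ContDiffOn ℝ (⊤ : ℕ∞) h U) (hk : ContDiffOn ℝ (⊤ : ℕ∞) k U)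
    (a : Fin 4 → ℂ) {x : Fin 4 → ℝ} (hx : x ∈ U) :
    DD a (fun y => f y * g y + h y * k y) x =
      (DD a f x * g x + f x * DD a g x) + (DD a h x * k x + h x * DD a k x) := by
  rw [DD_add hU (hf.mul hg) (hh.mul hk) hx, DD_mul hU hf hg hx, DD_mul hU hh hk hx]

/-- The general computation. -/
lemma DD_main {U : Set (Fin 4 → ℝ)} (hU : IsOpen U) {f : (Fin 4 → ℝ) → ℂ}
    (hf : ContDiffOn ℝ (⊤ : ℕ∞) f U) (v w z b : Fin 4 → ℂ)
    (hconf : ∀ x ∈ U, DD v f x * DD w f x + DD z f x * DD b f x = 0)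
    (hlap : ∀ x ∈ U, DD v (DD w f) x + DD z (DD b f) x = 0)
    {p : Fin 4 → ℝ} (hp : p ∈ U)
    (hv : DD v f p = 0) (hw : DD w f p = 0) (hb : DD b f p = 0) (hz : DD z f p ≠ 0) :
    (∀ a, DD a (DD b f) p = 0) ∧ DD v (DD v f) p * DD w (DD w f) p = 0 := by
  have S := fun a => DD_smooth hU hf a
  have SS := fun a c => DD_smooth hU (S c) a
  have h1 : ∀ a, ∀ x ∈ U,
      (DD a (DD v f) x * DD w f x + DD v f x * DD a (DD w f) x) +
      (DD a (DD z f) x * DD b f x + DD z f x * DD a (DD b f) x) = 0 := by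
    intro a x hx
    rw [← DD_quad hU (S v) (S w) (S z) (S b) a hx, DD_congr hU hconf a x hx, DD_zero]
  have hI : ∀ a, DD a (DD b f) p = 0 := by
    intro a
    have := h1 a p hp
    rw [hv, hw, hb] at this
    simpa [hz] using this
  refine ⟨hI, ?_⟩
  have h2 : ∀ c a,
      ((DD c (DD a (DD v f)) p * DD w f p + DD a (DD v f) p * DD c (DD w f) p) +
      (DD c (DD v f) p * DD a (DD w f) p + DD v f p * DD c (DD a (DD w f)) p)) +
      ((DD c (DD a (DD z f)) p * DD b f p + DD a (DD z f) p * DD c (DD b f) p) +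
      (DD c (DD z f) p * DD a (DD b f) p + DD z f p * DD c (DD a (DD b f)) p)) = 0 := by
    intro c a
    rw [← DD_quad hU (SS a v) (S w) (S v) (SS a w) c hp,
      ← DD_quad hU (SS a z) (S b) (S z) (SS a b) c hp,
      ← DD_add hU (((SS a v).mul (S w)).add ((S v).mul (SS a w)))
        (((SS a z).mul (S b)).add ((S z).mul (SS a b))) hp, DD_congr hU (h1 a) c p hp, DD_zero]
  have hvw : DD v (DD w f) p = 0 := by
    have := hlap p hp
    rwa [hI z, add_zero] at this
  have hwv : DD w (DD v f) p = 0 := by rw [DD_comm hU hf hp, hvw]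
  have hbv : DD b (DD v f) p = 0 := by rw [DD_comm hU hf hp, hI]
  have hbw : DD b (DD w f) p = 0 := by rw [DD_comm hU hf hp, hI]
  -- third derivatives
  have e1 := h2 b z
  simp only [hI, hv, hw, hb, hbv, hbw, mul_zero, zero_mul, zero_add, add_zero] at e1
  have e2 := h2 v w
  simp only [hI, hv, hw, hb, hvw, hwv, mul_zero, zero_mul, zero_add, add_zero] at e2
  have e3 : DD b (DD v (DD w f)) p + DD b (DD z (DD b f)) p = 0 := by
    rw [← DD_add hU (SS v w) (SS z b) hp, DD_congr hU hlap b p hp, DD_zero]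
  have e4 : DD b (DD v (DD w f)) p = DD v (DD w (DD b f)) p := by
    rw [DD_comm hU (S w) hp b v]
    exact DD_congr hU (fun x hx => DD_comm hU hf hx b w) v p hp
  rw [e4] at e3
  linear_combination e2 - DD z f p * e3 + e1

lemma Dv_eq : Dv = DD ![1/2, 1/2, 0, 0] := by
  funext f x
  simp [Dv, DD, Fin.sum_univ_four]; ring

lemma Dw_eq : Dw = DD ![-1/2, 1/2, 0, 0] := by
  funext f x
  simp [Dw, DD, Fin.sum_univ_four]; ring

lemma Dz_eq : Dz = DD ![0, 0, 1/2, -Complex.I/2] := by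
  funext f x
  simp [Dz, DD, Fin.sum_univ_four]; ring

lemma Dzb_eq : Dzb = DD ![0, 0, 1/2, Complex.I/2] := by
  funext f x
  simp [Dzb, DD, Fin.sum_univ_four]; ring

/-- The computations at the heart of Theorem 8.6: for a smooth harmonic morphism `φ` on an
open subset of Minkowski `ℝ⁴` and a point `p` where `φ_v = φ_w = φ_{z̄} = 0` and `φ_z ≠ 0`,
all first derivatives of `φ_{z̄}` vanish at `p`, and `φ_{vv}(p)·φ_{ww}(p) = 0`. -/
theorem minkowski_harmonic_morphism_pointwise_computations
    (U : Set (Fin 4 → ℝ)) (hU : IsOpen U)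
    (φ : (Fin 4 → ℝ) → ℂ) (hφ : ContDiffOn ℝ (⊤ : ℕ∞) φ U)
    (hconf : ∀ x ∈ U,
      -((pd 0 φ x) ^ 2) + (pd 1 φ x) ^ 2 + (pd 2 φ x) ^ 2 + (pd 3 φ x) ^ 2 = 0)
    (hlap : ∀ x ∈ U,
      -(pd 0 (pd 0 φ) x) + pd 1 (pd 1 φ) x + pd 2 (pd 2 φ) x + pd 3 (pd 3 φ) x = 0)
    (p : Fin 4 → ℝ) (hp : p ∈ U)
    (hv : Dv φ p = 0) (hw : Dw φ p = 0) (hzb : Dzb φ p = 0) (hz : Dz φ p ≠ 0) :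
    (Dv (Dzb φ) p = 0 ∧ Dw (Dzb φ) p = 0 ∧ Dz (Dzb φ) p = 0 ∧ Dzb (Dzb φ) p = 0) ∧
    (Dv (Dv φ) p) * (Dw (Dw φ) p) = 0 := by
  have hc : ∀ x ∈ U, Dv φ x * Dw φ x + Dz φ x * Dzb φ x = 0 := by
    intro x hx
    simp only [Dv, Dw, Dz, Dzb]
    linear_combination (1 / 4) * hconf x hx - (1 / 4) * (pd 3 φ x) ^ 2 * Complex.I_sq
  have hl : ∀ x ∈ U, Dv (Dw φ) x + Dz (Dzb φ) x = 0 := by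
    intro x hx
    rw [Dv_eq, Dw_eq, Dz_eq, Dzb_eq]
    have e : ∀ a b : Fin 4 → ℂ, DD a (DD b φ) x = ∑ i, a i * ∑ j, b j * pd i (pd j φ) x := by
      intro a b
      simp only [← pd_DD hU hφ hx _ b]
      rfl
    rw [e, e]
    simp [Fin.sum_univ_four]
    linear_combination (1 / 4) * hlap x hx - (1 / 4) * pd 3 (pd 3 φ) x * Complex.I_sq
      + (1 / 4) * pd_comm hU hφ hx 0 1 + (Complex.I / 4) * pd_comm hU hφ hx 2 3
  rw [Dv_eq, Dw_eq, Dz_eq, Dzb_eq] at *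
  obtain ⟨h, h'⟩ := DD_main hU hφ _ _ _ _ hc hl hp hv hw hzb hz
  exact ⟨⟨h _, h _, h _, h _⟩, h'⟩

end
end

section
/- Let η denote the Minkowski bilinear form on ℝ⁴: η(u,v) = −u₀v₀ + u₁v₁ + u₂v₂ + u₃v₃, and let e₀, e₁, e₂, e₃ be the standard basis. Let ℓ : ℝ⁴ → ℂ be an ℝ-linear map whose rank as a real-linear map is 1, and which satisfies −ℓ(e₀)² + ℓ(e₁)² + ℓ(e₂)² + ℓ(e₃)² = 0. Then there is exactly one 1-dimensional subspace W of ℝ⁴ such that W ⊆ ker ℓ and η(w,w) = 0 for all w ∈ W; moreover ker ℓ = W^⊥ = {v ∈ ℝ⁴ : η(v,w) = 0 for all w ∈ W}. -/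
noncomputable section

/-- The Minkowski bilinear form on `ℝ⁴`. -/
def eta (u v : Fin 4 → ℝ) : ℝ := -(u 0 * v 0) + u 1 * v 1 + u 2 * v 2 + u 3 * v 3

/-- Corollary 8.4 (linear-algebra form): if an `ℝ`-linear map `ℓ : ℝ⁴ → ℂ` has real rank `1`
and satisfies `−ℓ(e₀)² + ℓ(e₁)² + ℓ(e₂)² + ℓ(e₃)² = 0`, then there is a unique null line
`W ⊆ ker ℓ`, and moreover `ker ℓ = W^⊥` for the Minkowski form. -/
theorem degenerate_point_unique_null_direction
    (ℓ : (Fin 4 → ℝ) →ₗ[ℝ] ℂ)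
    (hrank : Module.finrank ℝ (LinearMap.range ℓ) = 1)
    (hconf : -(ℓ (Pi.single 0 1)) ^ 2 + (ℓ (Pi.single 1 1)) ^ 2
        + (ℓ (Pi.single 2 1)) ^ 2 + (ℓ (Pi.single 3 1)) ^ 2 = 0) :
    ∃ W : Submodule ℝ (Fin 4 → ℝ),
      (Module.finrank ℝ W = 1 ∧ W ≤ LinearMap.ker ℓ ∧ ∀ w ∈ W, eta w w = 0) ∧
      (∀ W' : Submodule ℝ (Fin 4 → ℝ),
        (Module.finrank ℝ W' = 1 ∧ W' ≤ LinearMap.ker ℓ ∧ ∀ w ∈ W', eta w w = 0) →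
        W' = W) ∧
      (∀ v, v ∈ LinearMap.ker ℓ ↔ ∀ w ∈ W, eta v w = 0) := by
  obtain ⟨c, hc, hspan⟩ := finrank_eq_one_iff'.mp hrank
  have hc0 : (c : ℂ) ≠ 0 := fun h => hc (Subtype.ext h)
  have hex : ∀ v, ∃ r : ℝ, ℓ v = (r : ℂ) * (c : ℂ) := by
    intro v
    obtain ⟨r, hr⟩ := hspan ⟨ℓ v, LinearMap.mem_range_self ℓ v⟩
    refine ⟨r, ?_⟩
    have := congrArg Subtype.val hr
    simpa using this.symm
  obtain ⟨a0, h0⟩ := hex (Pi.single 0 1)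
  obtain ⟨a1, h1⟩ := hex (Pi.single 1 1)
  obtain ⟨a2, h2⟩ := hex (Pi.single 2 1)
  obtain ⟨a3, h3⟩ := hex (Pi.single 3 1)
  rw [h0, h1, h2, h3] at hconf
  have hq : -a0 ^ 2 + a1 ^ 2 + a2 ^ 2 + a3 ^ 2 = 0 := by
    have h : ((-a0 ^ 2 + a1 ^ 2 + a2 ^ 2 + a3 ^ 2 : ℝ) : ℂ) * (c : ℂ) ^ 2 = 0 := by
      push_cast
      linear_combination hconf
    have h' := (mul_eq_zero.mp h).resolve_right (pow_ne_zero 2 hc0)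
    exact_mod_cast h'
  have hl : ∀ v, ℓ v = ((v 0 * a0 + v 1 * a1 + v 2 * a2 + v 3 * a3 : ℝ) : ℂ) * (c : ℂ) := by
    intro v
    have hv : v = v 0 • (Pi.single 0 1 : Fin 4 → ℝ) + v 1 • (Pi.single 1 1 : Fin 4 → ℝ)
        + v 2 • (Pi.single 2 1 : Fin 4 → ℝ) + v 3 • (Pi.single 3 1 : Fin 4 → ℝ) := by
      ext i
      fin_cases i <;> simp
    conv_lhs => rw [hv]
    simp only [map_add, map_smul, h0, h1, h2, h3, Complex.real_smul]
    push_cast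
    ring
  have hker : ∀ v, v ∈ LinearMap.ker ℓ ↔ v 0 * a0 + v 1 * a1 + v 2 * a2 + v 3 * a3 = 0 := by
    intro v
    rw [LinearMap.mem_ker, hl, mul_eq_zero, or_iff_left hc0, Complex.ofReal_eq_zero]
  have ha0 : a0 ≠ 0 := by
    intro h
    subst h
    have e1 : a1 = 0 := by nlinarith [sq_nonneg a1, sq_nonneg a2, sq_nonneg a3]
    have e2 : a2 = 0 := by nlinarith [sq_nonneg a1, sq_nonneg a2, sq_nonneg a3]
    have e3 : a3 = 0 := by nlinarith [sq_nonneg a1, sq_nonneg a2, sq_nonneg a3]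
    obtain ⟨v, hv⟩ := c.2
    apply hc0
    rw [← hv, hl, e1, e2, e3]
    simp
  have hn0 : (![-a0, a1, a2, a3] : Fin 4 → ℝ) ≠ 0 := by
    intro h
    have := congrFun h 0
    simp at this
    exact ha0 this
  refine ⟨Submodule.span ℝ {![-a0, a1, a2, a3]}, ⟨finrank_span_singleton hn0, ?_, ?_⟩, ?_, ?_⟩
  · rw [Submodule.span_singleton_le_iff_mem, hker]
    simp
    linear_combination hq
  · intro w hw
    obtain ⟨t, rfl⟩ := Submodule.mem_span_singleton.mp hw
    simp [eta]
    linear_combination t ^ 2 * hq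
  · rintro W' ⟨hr, hk, hnull⟩
    refine Submodule.eq_of_le_of_finrank_eq ?_ (hr.trans (finrank_span_singleton hn0).symm)
    intro w hw
    have hw1 := (hker w).mp (hk hw)
    have hw2 := hnull w hw
    unfold eta at hw2
    have hs : (a0 * w 1 + w 0 * a1) ^ 2 + (a0 * w 2 + w 0 * a2) ^ 2
        + (a0 * w 3 + w 0 * a3) ^ 2 = 0 := by
      linear_combination a0 ^ 2 * hw2 + w 0 ^ 2 * hq + 2 * a0 * w 0 * hw1
    have e1 : a0 * w 1 + w 0 * a1 = 0 := by
      apply pow_eq_zero_iff (two_ne_zero) |>.mp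
      nlinarith [sq_nonneg (a0 * w 1 + w 0 * a1), sq_nonneg (a0 * w 2 + w 0 * a2),
        sq_nonneg (a0 * w 3 + w 0 * a3)]
    have e2 : a0 * w 2 + w 0 * a2 = 0 := by
      apply pow_eq_zero_iff (two_ne_zero) |>.mp
      nlinarith [sq_nonneg (a0 * w 1 + w 0 * a1), sq_nonneg (a0 * w 2 + w 0 * a2),
        sq_nonneg (a0 * w 3 + w 0 * a3)]
    have e3 : a0 * w 3 + w 0 * a3 = 0 := by
      apply pow_eq_zero_iff (two_ne_zero) |>.mp
      nlinarith [sq_nonneg (a0 * w 1 + w 0 * a1), sq_nonneg (a0 * w 2 + w 0 * a2),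
        sq_nonneg (a0 * w 3 + w 0 * a3)]
    refine Submodule.mem_span_singleton.mpr ⟨-w 0 / a0, ?_⟩
    ext i
    fin_cases i <;> simp <;> field_simp <;> linarith
  · intro v
    rw [hker]
    constructor
    · intro h w hw
      obtain ⟨t, rfl⟩ := Submodule.mem_span_singleton.mp hw
      simp [eta]
      linear_combination t * h
    · intro h
      have := h _ (Submodule.mem_span_singleton_self _)
      simp [eta] at this
      linear_combination this

end
end

section
/- Let ψ : W → ℂ be a holomorphic function on an open subset W of ℂ³ (variables (w₁,w₂,w₃)), let A be an open subset of ℝ⁴ (coordinates (x₀,x₁,x₂,x₃)), and write q₁ = x₀ + ix₁, q̄₁ = x₀ − ix₁, q₂ = x₂ + ix₃, q̄₂ = x₂ − ix₃. Let μ : A → ℂ be a C¹ map such that for all x ∈ A: ψ(μ(x), q₁(x) − μ(x)q̄₂(x), q₂(x) + μ(x)q̄₁(x)) = 0, and the nondegeneracy condition (∂ψ/∂w₁ − q̄₂(x)·∂ψ/∂w₂ + q̄₁(x)·∂ψ/∂w₃), evaluated at (μ(x), q₁(x) − μ(x)q̄₂(x), q₂(x) + μ(x)q̄₁(x)), is nonzero.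 Then μ satisfies on A the equations ∂_{q̄₁}μ − μ·∂_{q₂}μ = 0 and ∂_{q̄₂}μ + μ·∂_{q₁}μ = 0, where ∂_{q₁} = ½(∂₀ − i∂₁), ∂_{q̄₁} = ½(∂₀ + i∂₁), ∂_{q₂} = ½(∂₂ − i∂₃), ∂_{q̄₂} = ½(∂₂ + i∂₃). -/
noncomputable section

/-- Complex partial derivative in the `i`-th coordinate direction of a map `ℂ³ → ℂ`. -/
def pdC3 (i : Fin 3) (ψ : (Fin 3 → ℂ) → ℂ) (z : Fin 3 → ℂ) : ℂ :=
  fderiv ℂ ψ z (Pi.single i 1)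

/-- `q₁ = x₀ + i x₁`. -/
def q1 (x : Fin 4 → ℝ) : ℂ := (x 0 : ℂ) + Complex.I * (x 1 : ℂ)
/-- `q̄₁ = x₀ − i x₁`. -/
def q1b (x : Fin 4 → ℝ) : ℂ := (x 0 : ℂ) - Complex.I * (x 1 : ℂ)
/-- `q₂ = x₂ + i x₃`. -/
def q2 (x : Fin 4 → ℝ) : ℂ := (x 2 : ℂ) + Complex.I * (x 3 : ℂ)
/-- `q̄₂ = x₂ − i x₃`. -/
def q2b (x : Fin 4 → ℝ) : ℂ := (x 2 : ℂ) - Complex.I * (x 3 : ℂ)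

/-- The point `(μ(x), q₁ − μ q̄₂, q₂ + μ q̄₁) ∈ ℂ³` of the incidence relations. -/
def twistorPt (μ : (Fin 4 → ℝ) → ℂ) (x : Fin 4 → ℝ) : Fin 3 → ℂ :=
  ![μ x, q1 x - μ x * q2b x, q2 x + μ x * q1b x]

/-- The differentiated incidence relation in the direction `v`. -/
theorem incidence_deriv
    (ψ : (Fin 3 → ℂ) → ℂ) (μ : (Fin 4 → ℝ) → ℂ) (x v : Fin 4 → ℝ)
    (hψ : DifferentiableAt ℂ ψ (twistorPt μ x)) (hμ : DifferentiableAt ℝ μ x)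
    (h0 : ∀ᶠ y in nhds x, ψ (twistorPt μ y) = 0) :
    fderiv ℝ μ x v * (pdC3 0 ψ (twistorPt μ x) - q2b x * pdC3 1 ψ (twistorPt μ x)
        + q1b x * pdC3 2 ψ (twistorPt μ x))
      + (q1 v - μ x * q2b v) * pdC3 1 ψ (twistorPt μ x)
      + (q2 v + μ x * q1b v) * pdC3 2 ψ (twistorPt μ x) = 0 := by
  -- restrict to the line through `x` in the direction `v`
  have hl : HasDerivAt (fun t : ℝ => x + t • v) v 0 := by
    simpa using ((hasDerivAt_id (0 : ℝ)).smul_const v).const_add x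
  have hc : ∀ i, HasDerivAt (fun t : ℝ => (((x + t • v) i : ℝ) : ℂ)) (v i : ℂ) 0 := fun i =>
    ((hasDerivAt_pi.1 hl) i).ofReal_comp
  have hm : HasDerivAt (fun t : ℝ => μ (x + t • v)) (fderiv ℝ μ x v) 0 := by
    have h1 : HasFDerivAt μ (fderiv ℝ μ x) (x + (0 : ℝ) • v) := by
      simpa using hμ.hasFDerivAt
    exact h1.comp_hasDerivAt (0 : ℝ) hl
  have hq1 : HasDerivAt (fun t : ℝ => q1 (x + t • v)) (q1 v) 0 :=
    (hc 0).add ((hc 1).const_mul Complex.I)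
  have hq1b : HasDerivAt (fun t : ℝ => q1b (x + t • v)) (q1b v) 0 :=
    (hc 0).sub ((hc 1).const_mul Complex.I)
  have hq2 : HasDerivAt (fun t : ℝ => q2 (x + t • v)) (q2 v) 0 :=
    (hc 2).add ((hc 3).const_mul Complex.I)
  have hq2b : HasDerivAt (fun t : ℝ => q2b (x + t • v)) (q2b v) 0 :=
    (hc 2).sub ((hc 3).const_mul Complex.I)
  have hT : HasDerivAt (fun t : ℝ => twistorPt μ (x + t • v))
      ![fderiv ℝ μ x v, q1 v - (fderiv ℝ μ x v * q2b x + μ x * q2b v),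
        q2 v + (fderiv ℝ μ x v * q1b x + μ x * q1b v)] 0 := by
    rw [hasDerivAt_pi]
    intro i
    fin_cases i
    · simpa [twistorPt] using hm
    · simpa [twistorPt] using hq1.fun_sub (hm.fun_mul hq2b)
    · simpa [twistorPt] using hq2.fun_add (hm.fun_mul hq1b)
  have hP : HasFDerivAt ψ ((fderiv ℂ ψ (twistorPt μ x)).restrictScalars ℝ)
      (twistorPt μ (x + (0 : ℝ) • v)) := by
    simpa using hψ.hasFDerivAt.restrictScalars ℝ
  have hcomp := hP.comp_hasDerivAt (0 : ℝ) hT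
  have hz : (ψ ∘ fun t : ℝ => twistorPt μ (x + t • v)) =ᶠ[nhds 0] fun _ => (0 : ℂ) := by
    have ht : Filter.Tendsto (fun t : ℝ => x + t • v) (nhds 0) (nhds x) := by
      simpa using hl.continuousAt.tendsto
    exact ht.eventually h0
  have key := hcomp.unique ((hasDerivAt_const (0 : ℝ) (0 : ℂ)).congr_of_eventuallyEq hz)
  have hdec : ∀ a b c : ℂ, fderiv ℂ ψ (twistorPt μ x) ![a, b, c]
      = a * pdC3 0 ψ (twistorPt μ x) + b * pdC3 1 ψ (twistorPt μ x)
        + c * pdC3 2 ψ (twistorPt μ x) := by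
    intro a b c
    have : (![a, b, c] : Fin 3 → ℂ) = a • Pi.single 0 1 + b • Pi.single 1 1
        + c • Pi.single 2 1 := by
      ext i
      fin_cases i <;> simp
    rw [this]
    simp [pdC3]
  rw [ContinuousLinearMap.coe_restrictScalars', hdec] at key
  linear_combination key

/-- The Euclidean Kerr theorem (Corollary 11.3, case (ii)): if a `C¹` map `μ` on an open
subset of `ℝ⁴` solves the incidence equation `ψ(μ, q₁ − μq̄₂, q₂ + μq̄₁) = 0` of a
holomorphic `ψ`, nondegenerately, then `μ` satisfies the Hermitian structure equations. -/
theorem kerr_theorem_euclidean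
    (W : Set (Fin 3 → ℂ)) (hW : IsOpen W)
    (ψ : (Fin 3 → ℂ) → ℂ) (hψ : DifferentiableOn ℂ ψ W)
    (A : Set (Fin 4 → ℝ)) (hA : IsOpen A)
    (μ : (Fin 4 → ℝ) → ℂ) (hμ : ContDiffOn ℝ 1 μ A)
    (hmem : ∀ x ∈ A, twistorPt μ x ∈ W)
    (hinc : ∀ x ∈ A, ψ (twistorPt μ x) = 0)
    (hnd : ∀ x ∈ A,
      pdC3 0 ψ (twistorPt μ x) - q2b x * pdC3 1 ψ (twistorPt μ x)
        + q1b x * pdC3 2 ψ (twistorPt μ x) ≠ 0) :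
    ∀ x ∈ A,
      (pd 0 μ x + Complex.I * pd 1 μ x) / 2
        - μ x * ((pd 2 μ x - Complex.I * pd 3 μ x) / 2) = 0 ∧
      (pd 2 μ x + Complex.I * pd 3 μ x) / 2
        + μ x * ((pd 0 μ x - Complex.I * pd 1 μ x) / 2) = 0 := by
  intro x hx
  have hAx : A ∈ nhds x := hA.mem_nhds hx
  have H := fun v => incidence_deriv ψ μ x v
    (hψ.differentiableAt (hW.mem_nhds (hmem x hx)))
    ((hμ.contDiffAt hAx).differentiableAt one_ne_zero)
    (Filter.mem_of_superset hAx hinc)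
  have hN := hnd x hx
  have H0 := H (Pi.single 0 1)
  have H1 := H (Pi.single 1 1)
  have H2 := H (Pi.single 2 1)
  have H3 := H (Pi.single 3 1)
  change pd 0 μ x * _ + _ + _ = 0 at H0
  change pd 1 μ x * _ + _ + _ = 0 at H1
  change pd 2 μ x * _ + _ + _ = 0 at H2
  change pd 3 μ x * _ + _ + _ = 0 at H3
  generalize pdC3 0 ψ (twistorPt μ x) - q2b x * pdC3 1 ψ (twistorPt μ x)
        + q1b x * pdC3 2 ψ (twistorPt μ x) = N at *
  simp [q1, q2, q1b, q2b] at H0 H1 H2 H3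
  have hI := Complex.I_mul_I
  constructor
  · apply (mul_eq_zero.1 _).resolve_right hN
    linear_combination (H0 + Complex.I * H1 - μ x * (H2 - Complex.I * H3)) / 2
      - (μ x ^ 2 + 1) / 2 * pdC3 1 ψ (twistorPt μ x) * hI
  · apply (mul_eq_zero.1 _).resolve_right hN
    linear_combination (H2 + Complex.I * H3 + μ x * (H0 - Complex.I * H1)) / 2
      - (μ x ^ 2 + 1) / 2 * pdC3 2 ψ (twistorPt μ x) * hI

end
end

section
/- Let A be an open subset of ℝ⁴ (coordinates (x₀,x₁,x₂,x₃)), φ : A → ℂ differentiable, p ∈ A, and μ ∈ ℂ. Suppose that at p: ∂_{q̄₁}φ − μ·∂_{q₂}φ = 0 and ∂_{q̄₂}φ + μ·∂_{q₁}φ = 0, where ∂_{q₁} = ½(∂₀ − i∂₁), ∂_{q̄₁} = ½(∂₀ + i∂₁), ∂_{q₂} = ½(∂₂ − i∂₃), ∂_{q̄₂} = ½(∂₂ + i∂₃), and also ∂φ/∂x₀(p) = 0. Then (∂₁φ(p))² + (∂₂φ(p))² + (∂₃φ(p))² = 0. -/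
noncomputable section

/-- The computation behind Proposition 13.1: if at `p` the map `φ` is holomorphic with
respect to the almost Hermitian structure represented by `μ`, i.e.
`∂_{q̄₁}φ − μ ∂_{q₂}φ = 0` and `∂_{q̄₂}φ + μ ∂_{q₁}φ = 0`, and `∂φ/∂x₀(p) = 0`, then
`(∂₁φ(p))² + (∂₂φ(p))² + (∂₃φ(p))² = 0`. -/
theorem Jholomorphic_restriction_horizontally_conformal
    (A : Set (Fin 4 → ℝ)) (hA : IsOpen A)
    (φ : (Fin 4 → ℝ) → ℂ) (p : Fin 4 → ℝ) (hp : p ∈ A)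
    (hdiff : DifferentiableAt ℝ φ p) (μ : ℂ)
    (heq1 : (pd 0 φ p + Complex.I * pd 1 φ p) / 2
        - μ * ((pd 2 φ p - Complex.I * pd 3 φ p) / 2) = 0)
    (heq2 : (pd 2 φ p + Complex.I * pd 3 φ p) / 2
        + μ * ((pd 0 φ p - Complex.I * pd 1 φ p) / 2) = 0)
    (h0 : pd 0 φ p = 0) :
    (pd 1 φ p) ^ 2 + (pd 2 φ p) ^ 2 + (pd 3 φ p) ^ 2 = 0 := by
  rw [h0] at heq1 heq2
  linear_combination (-2 * (Complex.I * pd 1 φ p)) * heq1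
    + (2 * (pd 2 φ p - Complex.I * pd 3 φ p)) * heq2
    + ((pd 1 φ p) ^ 2 + (pd 3 φ p) ^ 2) * Complex.I_sq

end
end
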